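/- Let λ ∈ ℂ and let ψ : ℝ → ℂ be a nonzero, twice continuously differentiable, square-integrable function with −ψ''(x) + i·x³·ψ(x) = λ·ψ(x) for all x ∈ ℝ. Then there is no twice continuously differentiable, square-integrable function φ : ℝ → ℂ satisfying −φ''(x) + i·x³·φ(x) − λ·φ(x) = ψ(x) for all x ∈ ℝ. (The eigenvalues of the imaginary cubic oscillator are algebraically simple: no Jordan generalized eigenvector exists.) -/

import Mathlib

/-!
The substitution `z = ix` turns an eigenfunction `ψ` into an entire solution `f` of
`f'' = (z³ + λ) f` that is square-integrable on the imaginary axis, and a Jordan vector `φ` into an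
entire solution `p` of `p'' = (z³ + λ) p + f` with the same property. Square integrability forces
`f' ≈ P f` on the imaginary axis, where `P` is the logarithmic derivative of the dominant WKB
solution. Such a cone condition survives along any line on which `Re (z^(5/2))` grows, and so it
spreads from the positive imaginary axis to the whole first quadrant. In particular `f` decays along
the ray `t ℝ₊` with `t = exp (2πi/5)`, a fifth root of unity, so that `u(r) = f(t r)` is a
subdominant solution of `u'' = (r³ - μ) u`, `μ = -t² λ`. Moreover a steep segment joins each point
of the ray to a point of the real axis, and along it `p / f`, and the ratio of `|f|` to the modulus
of the Schwarz reflection of `f`, change by an amount that tends to `0`.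

Eigenvalues are real. The reflection of `f` solves the equation with parameter `conj λ`, has the
same modulus as `f` on the real axis, hence asymptotically the same modulus on the ray. The shooting
function `μ ↦ S'(R) + R^(3/2) S(R)` of the Dirichlet solution `S` measures the ratio of `u(0)` to
`u(R)`, so its moduli at `-t² λ` and `-t² conj λ` agree in the limit `R → ∞`. But these two
parameters lie on one circle in the lower half-plane when `λ` is not real, and along that circle the
logarithm of the modulus is strictly monotone, uniformly in `R`.

For real `λ`, adding reflections makes `f` and `p` real on the real axis, so that `Im (p / f) → 0`
along the ray. This says that `Im W → 0`, with `W` the Wronskian of `S` and `r ↦ p(t r)`. On the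
other hand `W' = t² S u`, and the phase of `S u / u(0)` is controlled by the fluxes
`Re (-i μ̄ ȳ y')` of `S` and `u`, which have opposite signs: `λ f(0) Im W` is strictly increasing
from the value `0` at the origin, a contradiction.
-/

open MeasureTheory

namespace CubicOscillator

open Complex Filter Set Topology ComplexConjugate

/-! ### Linear equations with entire coefficients -/

/-- The power series with coefficients `c` converges absolutely on the whole plane. -/
def IsEntireCoeff (c : ℕ → ℂ) : Prop :=
  ∀ z : ℂ, Summable fun n => ‖c n * z ^ n‖

/-- The coefficients of the derivative of the power series with coefficients `c`. -/
def derivCoeff (c : ℕ → ℂ) (n : ℕ) : ℂ :=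
  (n + 1) * c (n + 1)

theorem isEntireCoeff_of_bounded {c : ℕ → ℂ}
    (hc : ∀ r : ℝ, 0 < r → ∃ A, ∀ n, ‖c n‖ * r ^ n ≤ A) : IsEntireCoeff c := by
  intro z
  have hr : 0 < 2 * (‖z‖ + 1) := by positivity
  obtain ⟨A, hA⟩ := hc _ hr
  refine Summable.of_nonneg_of_le (fun n => norm_nonneg _) (fun n => ?_)
    (summable_geometric_two.mul_left A)
  have hz : ‖z‖ ^ n ≤ (‖z‖ + 1) ^ n := pow_le_pow_left₀ (norm_nonneg z) (by linarith) n
  calc ‖c n * z ^ n‖ = ‖c n‖ * ‖z‖ ^ n := by rw [norm_mul, norm_pow]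
    _ ≤ ‖c n‖ * (‖z‖ + 1) ^ n := by gcongr
    _ = ‖c n‖ * (2 * (‖z‖ + 1)) ^ n * (1 / 2) ^ n := by
        rw [mul_pow, one_div, inv_pow]; field_simp
    _ ≤ A * (1 / 2) ^ n := by gcongr; exact hA n

theorem norm_derivCoeff_mul_pow_le (c : ℕ → ℂ) {r : ℝ} {z : ℂ} (hr : ‖z‖ ≤ r) (n : ℕ) :
    ‖derivCoeff c n * z ^ n‖ ≤ ‖c (n + 1) * ((2 * r + 1 : ℝ) : ℂ) ^ (n + 1)‖ := by
  have hr0 : 0 ≤ r := (norm_nonneg z).trans hr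
  have hn : ((n : ℝ) + 1) ≤ 2 ^ n := by exact_mod_cast Nat.lt_two_pow_self
  have hz : ‖z‖ ^ n ≤ r ^ n := pow_le_pow_left₀ (norm_nonneg z) hr n
  calc ‖derivCoeff c n * z ^ n‖ = ((n : ℝ) + 1) * ‖z‖ ^ n * ‖c (n + 1)‖ := by
        rw [derivCoeff, norm_mul, norm_mul, norm_pow]
        norm_cast
        ring
    _ ≤ 2 ^ n * r ^ n * ‖c (n + 1)‖ := by gcongr
    _ = (2 * r) ^ n * ‖c (n + 1)‖ := by rw [mul_pow]
    _ ≤ (2 * r + 1) ^ (n + 1) * ‖c (n + 1)‖ := by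
        gcongr
        calc (2 * r) ^ n ≤ (2 * r + 1) ^ n := by gcongr; linarith
          _ ≤ (2 * r + 1) ^ (n + 1) := pow_le_pow_right₀ (by linarith) n.le_succ
    _ = _ := by
        rw [norm_mul, norm_pow, norm_real, Real.norm_of_nonneg (by positivity), mul_comm]

theorem IsEntireCoeff.deriv {c : ℕ → ℂ} (hc : IsEntireCoeff c) :
    IsEntireCoeff (derivCoeff c) := fun _ =>
  Summable.of_nonneg_of_le (fun _ => norm_nonneg _) (norm_derivCoeff_mul_pow_le c le_rfl)
    ((summable_nat_add_iff 1).mpr (hc _))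

theorem IsEntireCoeff.hasDerivAt {c : ℕ → ℂ} (hc : IsEntireCoeff c) (z : ℂ) :
    HasDerivAt (fun w => ∑' n, c n * w ^ n)
      (∑' n, derivCoeff c n * z ^ n) z := by
  have hsplit : (fun w : ℂ => ∑' n, c n * w ^ n) =
      fun w => c 0 + ∑' n, c (n + 1) * w ^ (n + 1) := by
    funext w
    simpa using (hc w).of_norm.tsum_eq_zero_add
  rw [hsplit]
  refine HasDerivAt.const_add _ (hasDerivAt_tsum_of_isPreconnected
    (g := fun n w => c (n + 1) * w ^ (n + 1)) (g' := fun n w => derivCoeff c n * w ^ n)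
    (u := fun n => ‖c (n + 1) * ((2 * (‖z‖ + 1) + 1 : ℝ) : ℂ) ^ (n + 1)‖)
    ((summable_nat_add_iff 1).mpr (hc _)) Metric.isOpen_ball
    (convex_ball (0 : ℂ) (‖z‖ + 1)).isPreconnected (fun n w _ => ?_) (fun n w hw => ?_)
    (y₀ := 0) ?_ ?_ ?_)
  · refine ((hasDerivAt_pow (n + 1) w).const_mul (c (n + 1))).congr_deriv ?_
    simp only [derivCoeff, Nat.add_sub_cancel]; push_cast; ring
  · exact norm_derivCoeff_mul_pow_le c (mem_ball_zero_iff.mp hw).le n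
  · simpa using by positivity
  · simp [summable_zero]
  · simp

theorem exists_isEntireCoeff {q : ℂ → ℂ} (hq : Differentiable ℂ q) :
    ∃ c, IsEntireCoeff c ∧ ∀ z, q z = ∑' n, c n * z ^ n := by
  refine ⟨fun n => (n.factorial : ℂ)⁻¹ * iteratedDeriv n q 0, fun z => ?_, fun z => ?_⟩
  · refine (Summable.congr (hasSum_taylorSeries_of_entire hq 0 z).summable fun n => ?_).norm
    simp only [smul_eq_mul, sub_zero]; ring
  · simpa using (taylorSeries_eq_of_entire' 0 z hq).symm

/-- Taylor coefficients of the solution of `f'' = q f + g` with `f(0) = c₀`, `f'(0) = c₁`, given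
the Taylor coefficients of `q` and `g`. -/
noncomputable def odeCoeff (q g : ℕ → ℂ) (c₀ c₁ : ℂ) : ℕ → ℂ
  | 0 => c₀
  | 1 => c₁
  | n + 2 => (∑ k : Fin (n + 1), odeCoeff q g c₀ c₁ k * q (n - k) + g n) / ((n + 2) * (n + 1))

theorem derivCoeff_derivCoeff_odeCoeff (q g : ℕ → ℂ) (c₀ c₁ : ℂ) (n : ℕ) :
    derivCoeff (derivCoeff (odeCoeff q g c₀ c₁)) n =
      ∑ k ∈ Finset.range (n + 1), odeCoeff q g c₀ c₁ k * q (n - k) + g n := by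
  have h1 : (n : ℂ) + 1 ≠ 0 := by exact_mod_cast n.succ_ne_zero
  have h2 : (n : ℂ) + 2 ≠ 0 := by exact_mod_cast (n + 1).succ_ne_zero
  rw [derivCoeff, derivCoeff, odeCoeff,
    Fin.sum_univ_eq_sum_range (fun k => odeCoeff q g c₀ c₁ k * q (n - k))]
  push_cast
  field_simp
  ring

theorem mul_norm_odeCoeff_le (q g : ℕ → ℂ) (c₀ c₁ : ℂ) (n : ℕ) :
    ((n : ℝ) + 1) * (n + 2) * ‖odeCoeff q g c₀ c₁ (n + 2)‖ ≤
      ∑ k ∈ Finset.range (n + 1), ‖odeCoeff q g c₀ c₁ k‖ * ‖q (n - k)‖ + ‖g n‖ := by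
  have hrec := derivCoeff_derivCoeff_odeCoeff q g c₀ c₁ n
  rw [derivCoeff, derivCoeff, ← mul_assoc] at hrec
  calc ((n : ℝ) + 1) * (n + 2) * ‖odeCoeff q g c₀ c₁ (n + 2)‖
      = ‖((n : ℂ) + 1) * (((n + 1 : ℕ) : ℂ) + 1) * odeCoeff q g c₀ c₁ (n + 2)‖ := by
        rw [norm_mul, norm_mul]; norm_cast
    _ ≤ _ := by
        rw [hrec]
        refine (norm_add_le _ _).trans (add_le_add_left (norm_sum_le_of_le _ fun k _ => ?_) _)
        exact (norm_mul _ _).le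

theorem sum_norm_mul_norm_mul_pow_le {c q : ℕ → ℂ} {r A Q : ℝ} {n : ℕ} (hr : 0 ≤ r)
    (hA0 : 0 ≤ A) (hQ : ∑ k ∈ Finset.range (n + 1), ‖q k‖ * r ^ k ≤ Q)
    (hA : ∀ k ≤ n, ‖c k‖ * r ^ k ≤ A) :
    (∑ k ∈ Finset.range (n + 1), ‖c k‖ * ‖q (n - k)‖) * r ^ n ≤ Q * A := by
  calc (∑ k ∈ Finset.range (n + 1), ‖c k‖ * ‖q (n - k)‖) * r ^ n
      = ∑ k ∈ Finset.range (n + 1), ‖c k‖ * r ^ k * (‖q (n - k)‖ * r ^ (n - k)) := by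
        rw [Finset.sum_mul]
        refine Finset.sum_congr rfl fun k hk => ?_
        rw [← pow_mul_pow_sub r (Finset.mem_range_succ_iff.mp hk)]; ring
    _ ≤ ∑ k ∈ Finset.range (n + 1), A * (‖q (n - k)‖ * r ^ (n - k)) := by
        gcongr with k hk
        exact hA k (Finset.mem_range_succ_iff.mp hk)
    _ = A * ∑ k ∈ Finset.range (n + 1), ‖q k‖ * r ^ k := by
        rw [← Finset.mul_sum, ← Finset.sum_range_reflect (fun k => ‖q k‖ * r ^ k)]; simp
    _ ≤ Q * A := by rw [mul_comm]; gcongr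

theorem norm_odeCoeff_mul_pow_le {q g : ℕ → ℂ} {c₀ c₁ : ℂ} {r A Q G : ℝ} {n : ℕ} (hr : 0 ≤ r)
    (hQ : ∑ k ∈ Finset.range (n + 1), ‖q k‖ * r ^ k ≤ Q) (hG : ‖g n‖ * r ^ n ≤ G)
    (hA : ∀ k ≤ n, ‖odeCoeff q g c₀ c₁ k‖ * r ^ k ≤ A) (hn : r ^ 2 * (Q * A + G) ≤ n * A)
    (hA0 : 0 ≤ A) : ‖odeCoeff q g c₀ c₁ (n + 2)‖ * r ^ (n + 2) ≤ A := by
  set c := odeCoeff q g c₀ c₁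
  have hlarge : ((n : ℝ) + 1) * (n + 2) * (‖c (n + 2)‖ * r ^ (n + 2)) ≤ n * A := by
    calc ((n : ℝ) + 1) * (n + 2) * (‖c (n + 2)‖ * r ^ (n + 2))
        = ((n : ℝ) + 1) * (n + 2) * ‖c (n + 2)‖ * r ^ n * r ^ 2 := by ring
      _ ≤ (∑ k ∈ Finset.range (n + 1), ‖c k‖ * ‖q (n - k)‖ + ‖g n‖) * r ^ n * r ^ 2 := by
          gcongr; exact mul_norm_odeCoeff_le q g c₀ c₁ n
      _ ≤ (Q * A + G) * r ^ 2 := by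
          rw [add_mul]
          exact mul_le_mul_of_nonneg_right
            (add_le_add (sum_norm_mul_norm_mul_pow_le hr hA0 hQ hA) hG) (sq_nonneg r)
      _ ≤ n * A := by rwa [mul_comm]
  have hx : 0 ≤ ‖c (n + 2)‖ * r ^ (n + 2) := by positivity
  by_contra! hlt
  nlinarith [mul_le_mul_of_nonneg_left hlt.le (Nat.cast_nonneg (α := ℝ) n),
    mul_nonneg (sq_nonneg (n : ℝ)) hx, mul_nonneg (Nat.cast_nonneg (α := ℝ) n) hx]

theorem isEntireCoeff_odeCoeff {q g : ℕ → ℂ} (hq : IsEntireCoeff q) (hg : IsEntireCoeff g)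
    (c₀ c₁ : ℂ) : IsEntireCoeff (odeCoeff q g c₀ c₁) := by
  refine isEntireCoeff_of_bounded fun r hr => ?_
  have hsum : ∀ {b : ℕ → ℂ}, IsEntireCoeff b → Summable fun n => ‖b n‖ * r ^ n := fun hb => by
    simpa [abs_of_pos hr] using hb r
  set Q := ∑' n, ‖q n‖ * r ^ n
  set G := ∑' n, ‖g n‖ * r ^ n
  have hQ : ∀ n, ∑ k ∈ Finset.range n, ‖q k‖ * r ^ k ≤ Q := fun n =>
    (hsum hq).sum_le_tsum _ fun _ _ => by positivity
  have hG : ∀ n, ‖g n‖ * r ^ n ≤ G := fun n => (hsum hg).le_tsum n fun _ _ => by positivity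
  obtain ⟨N, hN⟩ := exists_nat_ge (r ^ 2 * (Q + G))
  set c := odeCoeff q g c₀ c₁
  set A := ∑ k ∈ Finset.range (N + 2), ‖c k‖ * r ^ k + 1
  have hA1 : 1 ≤ A := le_add_of_nonneg_left (Finset.sum_nonneg fun _ _ => by positivity)
  have hG0 : 0 ≤ G := tsum_nonneg fun _ => by positivity
  refine ⟨A, fun n => ?_⟩
  induction n using Nat.strong_induction_on with
  | _ n ih =>
    by_cases hn : n < N + 2
    · have := Finset.single_le_sum (f := fun k => ‖c k‖ * r ^ k) (fun k _ => by positivity)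
        (Finset.mem_range.mpr hn)
      linarith
    · obtain ⟨m, rfl⟩ : ∃ m, n = m + 2 := ⟨n - 2, by omega⟩
      refine norm_odeCoeff_mul_pow_le hr.le (hQ _) (hG m) (fun k hk => ih k (by omega)) ?_
        (by linarith)
      have hNm : (N : ℝ) ≤ m := by exact_mod_cast (by omega : N ≤ m)
      calc r ^ 2 * (Q * A + G) ≤ r ^ 2 * (Q * A + G * A) := by
            gcongr; exact le_mul_of_one_le_right hG0 hA1
        _ = r ^ 2 * (Q + G) * A := by ring
        _ ≤ m * A := by gcongr; exact hN.trans hNm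

theorem exists_entire_solution {q g : ℂ → ℂ} (hq : Differentiable ℂ q)
    (hg : Differentiable ℂ g) (c₀ c₁ : ℂ) :
    ∃ f : ℂ → ℂ, Differentiable ℂ f ∧ f 0 = c₀ ∧ deriv f 0 = c₁ ∧
      ∀ z, deriv (deriv f) z = q z * f z + g z := by
  obtain ⟨b, hb, hqb⟩ := exists_isEntireCoeff hq
  obtain ⟨d, hd, hgd⟩ := exists_isEntireCoeff hg
  set c := odeCoeff b d c₀ c₁
  have hc : IsEntireCoeff c := isEntireCoeff_odeCoeff hb hd c₀ c₁
  have hderiv := funext fun z => (hc.hasDerivAt z).deriv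
  have hzero : ∀ a : ℕ → ℂ, ∑' n, a n * (0 : ℂ) ^ n = a 0 := fun a => by
    rw [tsum_eq_single 0 fun n hn => by simp [hn]]; simp
  refine ⟨fun z => ∑' n, c n * z ^ n, fun z => (hc.hasDerivAt z).differentiableAt, ?_, ?_,
    fun z => ?_⟩
  · simp only [hzero, c, odeCoeff]
  · simp [hderiv, hzero, derivCoeff, c, odeCoeff]
  · rw [hderiv, (hc.deriv.hasDerivAt z).deriv, hqb, hgd, mul_comm,
      tsum_mul_tsum_eq_tsum_sum_range_of_summable_norm (hc z) (hb z), ← Summable.tsum_add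
      (summable_norm_sum_mul_range_of_summable_norm (hc z) (hb z)).of_norm (hd z).of_norm]
    refine tsum_congr fun n => ?_
    rw [derivCoeff_derivCoeff_odeCoeff, add_mul, Finset.sum_mul]
    congr 1
    refine Finset.sum_congr rfl fun k hk => ?_
    rw [← pow_mul_pow_sub z (Finset.mem_range_succ_iff.mp hk)]; ring

/-! ### Entire solutions of the cubic equation -/

theorem norm_le_gronwallBound_of_linear {y y' Q e : ℝ → ℂ} {R δ K ε : ℝ}
    (hy : ∀ r, HasDerivAt y (y' r) r) (hy' : ∀ r, HasDerivAt y' (Q r * y r + e r) r)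
    (hK : 1 ≤ K) (hQ : ∀ r ∈ Icc 0 R, ‖Q r‖ ≤ K) (he : ∀ r ∈ Icc 0 R, ‖e r‖ ≤ ε)
    (h₀ : ‖y 0‖ ≤ δ) (h₁ : ‖y' 0‖ ≤ δ) {r : ℝ} (hr : r ∈ Icc 0 R) :
    ‖y r‖ ≤ gronwallBound δ K ε r ∧ ‖y' r‖ ≤ gronwallBound δ K ε r := by
  have hpair : ∀ r, HasDerivAt (fun s => (y s, y' s)) (y' r, Q r * y r + e r) r := fun r =>
    (hy r).prodMk (hy' r)
  have hε : 0 ≤ ε := (norm_nonneg _).trans (he r hr)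
  have hmain := norm_le_gronwallBound_of_norm_deriv_right_le (δ := δ) (K := K) (ε := ε)
    (a := 0) (b := R) (fun r _ => (hpair r).continuousAt.continuousWithinAt)
    (fun r _ => (hpair r).hasDerivWithinAt) (max_le h₀ h₁) (fun r hr => ?_) r hr
  · rw [sub_zero] at hmain
    exact ⟨(le_max_left _ _).trans hmain, (le_max_right _ _).trans hmain⟩
  · have hy_le : ‖y r‖ ≤ ‖(y r, y' r)‖ := le_max_left _ _
    have hy'_le : ‖y' r‖ ≤ ‖(y r, y' r)‖ := le_max_right _ _
    have hpos : 0 ≤ ‖(y r, y' r)‖ := norm_nonneg _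
    refine max_le (by nlinarith) ((norm_add_le _ _).trans ?_)
    rw [norm_mul]
    gcongr
    exacts [hQ r (Ico_subset_Icc_self hr), he r (Ico_subset_Icc_self hr)]

theorem eq_zero_of_linear {y y' Q : ℝ → ℂ} (hQ : Continuous Q)
    (hy : ∀ r, HasDerivAt y (y' r) r) (hy' : ∀ r, HasDerivAt y' (Q r * y r) r)
    (h₀ : y 0 = 0) (h₁ : y' 0 = 0) {R : ℝ} (hR : 0 ≤ R) : y R = 0 := by
  obtain ⟨K, hK⟩ := isCompact_Icc.exists_bound_of_continuousOn (s := Icc 0 R) hQ.continuousOn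
  have := (norm_le_gronwallBound_of_linear (e := 0) (ε := 0) (δ := 0) (K := max K 1) hy
    (by simpa using hy') (le_max_right _ _) (fun r hr => (hK r hr).trans (le_max_left _ _))
    (by simp) (by simp [h₀]) (by simp [h₁]) (right_mem_Icc.mpr hR)).1
  simpa [gronwallBound_ε0_δ0] using this

/-- `f` is an entire solution of `f'' = (z³ + a) f + g`. The substitution `z = ix` turns
`-ψ'' + ix³ψ - aψ = 0` into the case `g = 0`, and the equation of a Jordan vector into the case
where `g` is the eigenfunction. -/
structure IsCubicSol (a : ℂ) (g f : ℂ → ℂ) : Prop where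
  differentiable : Differentiable ℂ f
  deriv_deriv : ∀ z, deriv (deriv f) z = (z ^ 3 + a) * f z + g z

/-- The Schwarz reflection of `f` in the real axis. -/
def reflect (f : ℂ → ℂ) (z : ℂ) : ℂ :=
  conj (f (conj z))

/-- Square integrability along the imaginary axis. -/
def AxisL2 (f : ℂ → ℂ) : Prop :=
  Integrable fun s : ℝ => ‖f (s * I)‖ ^ 2

section

variable {a t : ℂ} {f f₁ f₂ g g₁ g₂ : ℂ → ℂ}

theorem deriv_reflect (f : ℂ → ℂ) : deriv (reflect f) = reflect (deriv f) :=
  funext fun _ => congrFun deriv_conj_conj _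

theorem reflect_ofReal (f : ℂ → ℂ) (x : ℝ) : reflect f x = conj (f x) := by
  rw [reflect, conj_ofReal]

theorem reflect_zero : reflect 0 = 0 := by
  funext z
  simp [reflect]

theorem reflect_reflect (f : ℂ → ℂ) : reflect (reflect f) = f := by
  funext z
  simp [reflect]

theorem reflect_ne_zero (hf : f ≠ 0) : reflect f ≠ 0 := fun h => hf <| by
  rw [← reflect_reflect f, h, reflect_zero]

namespace IsCubicSol

theorem reflect (hf : IsCubicSol a g f) : IsCubicSol (conj a) (reflect g) (reflect f) where
  differentiable z := by
    have := (hf.differentiable (conj z)).conj_conj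
    rwa [conj_conj] at this
  deriv_deriv z := by
    simp only [deriv_reflect, CubicOscillator.reflect, hf.deriv_deriv, map_add, map_mul, map_pow,
      conj_conj]

theorem reflect_homogeneous (hf : IsCubicSol a 0 f) :
    IsCubicSol (conj a) 0 (CubicOscillator.reflect f) := by
  simpa only [reflect_zero] using hf.reflect

theorem add (h₁ : IsCubicSol a g₁ f₁) (h₂ : IsCubicSol a g₂ f₂) :
    IsCubicSol a (g₁ + g₂) (f₁ + f₂) where
  differentiable := h₁.differentiable.add h₂.differentiable
  deriv_deriv z := by
    have hderiv : deriv (f₁ + f₂) = deriv f₁ + deriv f₂ :=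
      funext fun z => deriv_add (h₁.differentiable z) (h₂.differentiable z)
    rw [hderiv, deriv_add (h₁.differentiable.deriv z) (h₂.differentiable.deriv z),
      h₁.deriv_deriv, h₂.deriv_deriv, Pi.add_apply, Pi.add_apply]
    ring

theorem const_smul (c : ℂ) (hf : IsCubicSol a g f) : IsCubicSol a (c • g) (c • f) where
  differentiable := hf.differentiable.const_smul c
  deriv_deriv z := by
    have hderiv : deriv (c • f) = c • deriv f :=
      funext fun z => deriv_const_smul c (hf.differentiable z)
    rw [hderiv, deriv_const_smul c (hf.differentiable.deriv z), hf.deriv_deriv]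
    simp only [Pi.smul_apply, smul_eq_mul]
    ring

theorem deriv_deriv_homogeneous (hf : IsCubicSol a 0 f) (z : ℂ) :
    deriv (deriv f) z = (z ^ 3 + a) * f z := by
  rw [hf.deriv_deriv, Pi.zero_apply, add_zero]

theorem comp_mul_left (ht : t ^ 5 = 1) (hf : IsCubicSol a g f) :
    IsCubicSol (t ^ 2 * a) (fun z => t ^ 2 * g (t * z)) (fun z => f (t * z)) where
  differentiable := hf.differentiable.comp (differentiable_id.const_mul t)
  deriv_deriv z := by
    have hderiv : deriv (fun z => f (t * z)) = fun z => t * deriv f (t * z) :=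
      funext fun z => deriv_comp_mul_left t f z
    have hderiv₂ : deriv (fun z => deriv f (t * z)) z = t * deriv (deriv f) (t * z) :=
      deriv_comp_mul_left t (deriv f) z
    rw [hderiv, deriv_const_mul_field, hderiv₂, hf.deriv_deriv]
    linear_combination z ^ 3 * f (t * z) * ht

theorem comp_mul_left_homogeneous (ht : t ^ 5 = 1) (hf : IsCubicSol a 0 f) :
    IsCubicSol (t ^ 2 * a) 0 (fun z => f (t * z)) := by
  simpa [Pi.zero_def] using hf.comp_mul_left ht

end IsCubicSol

theorem hasDerivAt_line (hf : Differentiable ℂ f) (z₀ T : ℂ) (s : ℝ) :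
    HasDerivAt (fun s : ℝ => f (z₀ + s * T)) (T * deriv f (z₀ + s * T)) s := by
  have hline : HasDerivAt (fun s : ℝ => z₀ + s * T) T s := by
    simpa using ((hasDerivAt_id s).ofReal_comp.mul_const T).const_add z₀
  rw [mul_comm]
  exact (hf _).hasDerivAt.comp s hline

theorem IsCubicSol.hasDerivAt_line_deriv (hf : IsCubicSol a g f) (z₀ T : ℂ) (s : ℝ) :
    HasDerivAt (fun s : ℝ => T * deriv f (z₀ + s * T))
      (T ^ 2 * (((z₀ + s * T) ^ 3 + a) * f (z₀ + s * T) + g (z₀ + s * T))) s := by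
  refine ((hasDerivAt_line hf.differentiable.deriv z₀ T s).const_mul T).congr_deriv ?_
  rw [hf.deriv_deriv]
  ring

theorem IsCubicSol.eq_zero_of_deriv_eq_zero (hf : IsCubicSol a 0 f) {z₀ : ℂ} (h₀ : f z₀ = 0)
    (h₁ : deriv f z₀ = 0) : f = 0 := by
  funext z
  have := eq_zero_of_linear (Q := fun s : ℝ => (z - z₀) ^ 2 * ((z₀ + s * (z - z₀)) ^ 3 + a))
    (by fun_prop) (hasDerivAt_line hf.differentiable z₀ (z - z₀))
    (fun s => (hf.hasDerivAt_line_deriv z₀ (z - z₀) s).congr_deriv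
      (by simp only [Pi.zero_apply, add_zero]; ring))
    (by simpa using h₀) (by simp [h₁]) zero_le_one
  simpa using this

theorem exists_isCubicSol_eq_on_axis (hg : Differentiable ℂ g) {w : ℝ → ℂ}
    (hw : ContDiff ℝ 2 w)
    (heq : ∀ x : ℝ, -(deriv (deriv w) x) + I * (x : ℂ) ^ 3 * w x - a * w x = g (x * I)) :
    ∃ f, IsCubicSol a g f ∧ ∀ x : ℝ, f (x * I) = w x := by
  obtain ⟨f, hf, hf₀, hf₁, hf₂⟩ := exists_entire_solution
    (q := fun z => z ^ 3 + a) (by fun_prop) hg (w 0) (-I * deriv w 0)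
  have hfsol : IsCubicSol a g f := ⟨hf, hf₂⟩
  refine ⟨f, hfsol, fun x => ?_⟩
  have hscale : ∀ (v : ℝ → ℂ) (s : ℝ), DifferentiableAt ℝ v (s * x) →
      HasDerivAt (fun s => v (s * x)) (x * deriv v (s * x)) s := fun v s hv =>
    (hv.hasDerivAt.scomp s (hasDerivAt_mul_const x)).congr_deriv real_smul
  have hw₁ : ∀ s : ℝ, HasDerivAt (fun s => w (s * x)) (x * deriv w (s * x)) s := fun s =>
    hscale w s (hw.differentiable two_ne_zero _)
  have hw₂ : ∀ s : ℝ, HasDerivAt (fun s : ℝ => (x : ℂ) * deriv w (s * x))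
      (x * (x * deriv (deriv w) (s * x))) s := fun s =>
    (hscale (deriv w) s (hw.differentiable_deriv_two _)).const_mul (x : ℂ)
  have hzero := eq_zero_of_linear (R := 1)
    (y := fun s => f (0 + s * (x * I)) - w (s * x))
    (Q := fun s : ℝ => (x : ℂ) ^ 2 * (I * (s * x : ℂ) ^ 3 - a)) (by fun_prop)
    (fun s => (hasDerivAt_line hf 0 (x * I) s).sub (hw₁ s))
    (fun s => ((hfsol.hasDerivAt_line_deriv 0 (x * I) s).sub (hw₂ s)).congr_deriv ?_)
    (by simp [hf₀])
    (by simp only [ofReal_zero, zero_mul, add_zero, hf₁, neg_mul, mul_neg]; ring_nf; simp)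
    zero_le_one
  · simpa [sub_eq_zero] using hzero
  · have := heq (s * x)
    have hz : ((s * x : ℝ) : ℂ) * I = 0 + s * (x * I) := by push_cast; ring
    rw [hz] at this
    push_cast at this
    linear_combination (x : ℂ) ^ 2 * this + (x : ℂ) ^ 2 *
      (((s : ℂ) * x) ^ 3 * I * (I ^ 2 - 1) * f (0 + s * (x * I)) + a * f (0 + s * (x * I)) +
        g (0 + s * (x * I))) * I_sq

theorem AxisL2.add (h₁ : AxisL2 f₁) (h₂ : AxisL2 f₂) (hf₁ : Continuous f₁) (hf₂ : Continuous f₂) :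
    AxisL2 (f₁ + f₂) := by
  refine ((Integrable.add h₁ h₂).const_mul 2).mono' (by fun_prop) (.of_forall fun s => ?_)
  rw [Real.norm_of_nonneg (by positivity)]
  calc ‖f₁ (s * I) + f₂ (s * I)‖ ^ 2 ≤ (‖f₁ (s * I)‖ + ‖f₂ (s * I)‖) ^ 2 := by
        gcongr; exact norm_add_le _ _
    _ ≤ 2 * (‖f₁ (s * I)‖ ^ 2 + ‖f₂ (s * I)‖ ^ 2) := add_sq_le

theorem AxisL2.const_smul (c : ℂ) (hf : AxisL2 f) : AxisL2 (c • f) := by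
  simpa [AxisL2, mul_pow] using hf.const_mul (‖c‖ ^ 2)

theorem AxisL2.reflect (hf : AxisL2 f) : AxisL2 (reflect f) := by
  simpa [AxisL2, CubicOscillator.reflect] using Integrable.comp_neg hf

end

theorem hasDerivAt_norm_sq {y : ℝ → ℂ} {y' : ℂ} {r : ℝ} (hy : HasDerivAt y y' r) :
    HasDerivAt (fun s => ‖y s‖ ^ 2) (2 * (conj (y r) * y').re) r := by
  refine hy.norm_sq.congr_deriv ?_
  rw [Complex.inner, mul_comm y']

/-- The flux `Re (ζ ȳ y')` of a solution of a second-order equation, in the direction `ζ`. -/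
def flux (ζ : ℂ) (y y' : ℝ → ℂ) (r : ℝ) : ℝ :=
  (ζ * (conj (y r) * y' r)).re

theorem hasDerivAt_flux {ζ q : ℂ} {y y' : ℝ → ℂ} {r : ℝ} (hy : HasDerivAt y (y' r) r)
    (hy' : HasDerivAt y' (q * y r) r) :
    HasDerivAt (flux ζ y y') (ζ.re * ‖y' r‖ ^ 2 + (ζ * q).re * ‖y r‖ ^ 2) r := by
  have hprod : HasDerivAt (fun s => ζ * (conj (y s) * y' s))
      (ζ * (conj (y' r) * y' r + conj (y r) * (q * y r))) r :=
    ((hy.star.mul hy').const_mul ζ)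
  have hre := Complex.reCLM.hasFDerivAt.comp_hasDerivAt r hprod
  refine hre.congr_deriv ?_
  rw [conj_mul', mul_left_comm, conj_mul', mul_add, ← mul_assoc]
  simp [← ofReal_pow, add_re]

theorem abs_flux_le (ζ : ℂ) (y y' : ℝ → ℂ) (r : ℝ) :
    |flux ζ y y' r| ≤ ‖ζ‖ * (‖y r‖ * ‖y' r‖) := by
  refine (abs_re_le_norm _).trans ?_
  rw [norm_mul, norm_mul, Complex.norm_conj]

theorem exists_bounded_antideriv {h : ℝ → ℝ} (hc : Continuous h) (hi : Integrable h) :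
    ∃ J : ℝ → ℝ, (∀ s, HasDerivAt J (h s) s) ∧ ∃ C, ∀ s, |J s| ≤ C := by
  refine ⟨fun s => ∫ x in (0 : ℝ)..s, h x, fun s => hc.integral_hasStrictDerivAt 0 s |>.hasDerivAt,
    ∫ x, ‖h x‖, fun s => ?_⟩
  exact (intervalIntegral.norm_integral_le_integral_norm_uIoc).trans
    (setIntegral_le_integral hi.norm (.of_forall fun _ => norm_nonneg _))

theorem monotoneOn_Ici_of_hasDerivAt {f f' : ℝ → ℝ} {s₀ : ℝ}
    (hf : ∀ s, s₀ ≤ s → HasDerivAt f (f' s) s) (hf' : ∀ s, s₀ ≤ s → 0 ≤ f' s) :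
    MonotoneOn f (Ici s₀) := by
  refine monotoneOn_of_hasDerivWithinAt_nonneg (convex_Ici s₀)
    (fun s hs => (hf s hs).continuousAt.continuousWithinAt)
    (fun s hs => (hf s (interior_subset hs)).hasDerivWithinAt)
    (fun s hs => hf' s (interior_subset hs))

theorem tendsto_atTop_of_hasDerivAt_ge {K K' : ℝ → ℝ} {s₀ ε : ℝ} (hε : 0 < ε)
    (hK : ∀ s, s₀ ≤ s → HasDerivAt K (K' s) s) (hK' : ∀ s, s₀ ≤ s → ε ≤ K' s) :
    Tendsto K atTop atTop := by
  have hmono : MonotoneOn (fun s => K s - ε * s) (Ici s₀) :=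
    monotoneOn_Ici_of_hasDerivAt (fun s hs => (hK s hs).sub ((hasDerivAt_id s).const_mul ε))
      (fun s hs => by linarith [hK' s hs])
  refine tendsto_atTop_mono' atTop ?_
    (tendsto_atTop_add_const_right atTop (K s₀ - ε * s₀) (tendsto_id.const_mul_atTop hε))
  filter_upwards [eventually_ge_atTop s₀] with s hs
  have := hmono self_mem_Ici hs hs
  simp only [id_eq]
  linarith

/-- Since `K' / K²` is integrable at infinity, so would be `1 ≤ √(M h K' / K²)`. -/
theorem not_integrable_of_sq_le_mul_deriv {K K' h : ℝ → ℝ} {s₀ ε M : ℝ} (hε : 0 < ε) (hM : 0 ≤ M)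
    (hK : ∀ s, s₀ ≤ s → HasDerivAt K (K' s) s) (hK' : ∀ s, s₀ ≤ s → ε ≤ K' s)
    (hKh : ∀ s, s₀ ≤ s → K s ^ 2 ≤ M * K' s * h s) (hc : Continuous h) :
    ¬ Integrable h := by
  intro hi
  obtain ⟨J, hJ, C, hC⟩ := exists_bounded_antideriv hc hi
  obtain ⟨s₁, hs₁⟩ := eventually_atTop.mp
    ((tendsto_atTop_of_hasDerivAt_ge hε hK hK').eventually_ge_atTop 1)
  set s₂ := max s₀ s₁
  have h₀ : ∀ {s}, s₂ ≤ s → s₀ ≤ s := (le_max_left _ _).trans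
  have hK1 : ∀ {s}, s₂ ≤ s → 1 ≤ K s := fun hs => hs₁ _ ((le_max_right _ _).trans hs)
  have hmono : MonotoneOn (fun s => -(M * (K s)⁻¹) + J s - 2 * s) (Ici s₂) := by
    refine monotoneOn_Ici_of_hasDerivAt (f' := fun s => -(M * (-K' s / K s ^ 2)) + h s - 2 * 1)
      (fun s hs => ((((hK s (h₀ hs)).inv (by linarith [hK1 hs])).const_mul M).neg.add (hJ s)).sub
        ((hasDerivAt_id s).const_mul 2)) (fun s hs => ?_)
    have hpos : 0 < K s ^ 2 := by have := hK1 hs; positivity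
    have hx : 0 ≤ M * (K' s / K s ^ 2) :=
      mul_nonneg hM (div_nonneg (hε.le.trans (hK' s (h₀ hs))) hpos.le)
    have hxh : 1 ≤ M * (K' s / K s ^ 2) * h s := by
      rw [← mul_div_assoc, div_mul_eq_mul_div, one_le_div hpos]
      exact hKh s (h₀ hs)
    have hh : 0 < h s := by by_contra! hneg; nlinarith
    rw [neg_div]
    nlinarith [sq_nonneg (M * (K' s / K s ^ 2) - h s)]
  have hC0 : 0 ≤ C := (abs_nonneg _).trans (hC 0)
  have hle := hmono self_mem_Ici (show s₂ + M + C + 1 ∈ Ici s₂ by simp only [mem_Ici]; linarith)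
    (by linarith)
  simp only at hle
  have hKs : M * (K s₂)⁻¹ ≤ M := mul_le_of_le_one_right hM (inv_le_one_of_one_le₀ (hK1 le_rfl))
  have hKt : 0 ≤ M * (K (s₂ + M + C + 1))⁻¹ := by
    have := hK1 (show s₂ ≤ s₂ + M + C + 1 by linarith)
    positivity
  linarith [(abs_le.mp (hC s₂)).1, (abs_le.mp (hC (s₂ + M + C + 1))).2]

/-! ### The cone condition around the WKB slope -/

/-- The logarithmic derivative of the WKB approximation `z^(-3/4) exp (2/5 z^(5/2))` to the
growing solutions of `f'' = (z³ + a) f`. -/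
noncomputable def wkbSlope (z : ℂ) : ℂ :=
  z ^ (3 / 2 : ℂ) - 3 / (4 * z)

/-- The amount by which `f` fails to satisfy the first-order equation `f' = P f` of the WKB
approximation. -/
noncomputable def wkbDefect (f : ℂ → ℂ) (z : ℂ) : ℂ :=
  deriv f z - wkbSlope z * f z

/-- The cone condition `‖f' - P f‖ ≤ c ‖f‖` says that this energy is nonnegative. -/
noncomputable def coneEnergy (c : ℝ) (f : ℂ → ℂ) (z : ℂ) : ℝ :=
  c ^ 2 * ‖f z‖ ^ 2 - ‖wkbDefect f z‖ ^ 2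

section

variable {a T z z₀ : ℂ} {c s : ℝ} {f : ℂ → ℂ}

theorem coneEnergy_nonneg_iff (hc : 0 ≤ c) :
    0 ≤ coneEnergy c f z ↔ ‖wkbDefect f z‖ ≤ c * ‖f z‖ := by
  rw [coneEnergy, sub_nonneg, ← mul_pow, pow_le_pow_iff_left₀ (norm_nonneg _) (by positivity)
    two_ne_zero]

theorem cpow_three_halves_sq (z : ℂ) : (z ^ (3 / 2 : ℂ)) ^ 2 = z ^ 3 := by
  rw [← cpow_mul_nat, ← cpow_natCast]
  norm_num

theorem norm_cpow_three_halves (z : ℂ) : ‖z ^ (3 / 2 : ℂ)‖ = ‖z‖ ^ (3 / 2 : ℝ) := by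
  simpa using norm_cpow_real z (3 / 2)

theorem hasDerivAt_wkbSlope (hz : z ∈ slitPlane) :
    HasDerivAt wkbSlope (z ^ 3 + 21 / (16 * z ^ 2) - wkbSlope z ^ 2) z := by
  have hz0 : z ≠ 0 := slitPlane_ne_zero hz
  have hpow := (hasDerivAt_id z).cpow_const (c := 3 / 2) hz
  have hinv := ((hasDerivAt_id z).const_mul 4).fun_inv (by simpa using hz0)
  refine (hpow.sub (hinv.const_mul 3)).congr_deriv ?_
  have hsplit : z ^ (3 / 2 : ℂ) = z * z ^ (3 / 2 - 1 : ℂ) := by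
    rw [cpow_sub _ _ hz0, cpow_one]
    field_simp
  rw [wkbSlope, sub_sq, cpow_three_halves_sq, hsplit]
  simp only [id_eq]
  field_simp
  ring

theorem IsCubicSol.hasDerivAt_wkbDefect (hf : IsCubicSol a 0 f) (hz : z ∈ slitPlane) :
    HasDerivAt (wkbDefect f)
      ((a - 21 / (16 * z ^ 2)) * f z - wkbSlope z * wkbDefect f z) z := by
  refine ((hf.differentiable.deriv z).hasDerivAt.sub
    ((hasDerivAt_wkbSlope hz).mul (hf.differentiable z).hasDerivAt)).congr_deriv ?_
  rw [hf.deriv_deriv_homogeneous, wkbDefect]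
  ring

theorem cone_inequality {v b p d : ℂ} (hT : ‖T‖ = 1) (hc : 0 < c)
    (h : ‖d‖ + c ^ 2 ≤ 2 * c * (T * p).re) :
    0 ≤ c ^ 2 * (2 * (conj v * (T * (b + p * v))).re) -
      2 * (conj b * (T * (d * v - p * b))).re := by
  have hre : c ^ 2 * (2 * (conj v * (T * (b + p * v))).re) -
      2 * (conj b * (T * (d * v - p * b))).re =
      2 * ((T * p).re * (c ^ 2 * ‖v‖ ^ 2 + ‖b‖ ^ 2) +
        c ^ 2 * (conj v * (T * b)).re - (conj b * (T * (d * v))).re) := by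
    simp only [← normSq_eq_norm_sq, normSq_apply, mul_re, mul_im, add_re, add_im, sub_re, sub_im,
      conj_re, conj_im]
    ring
  have hvb : -(‖v‖ * ‖b‖) ≤ (conj v * (T * b)).re := by
    refine (abs_le.mp ((abs_re_le_norm _).trans_eq ?_)).1
    rw [norm_mul, norm_mul, hT, Complex.norm_conj, one_mul]
  have hdvb : (conj b * (T * (d * v))).re ≤ ‖d‖ * (‖v‖ * ‖b‖) := by
    refine (abs_le.mp ((abs_re_le_norm _).trans_eq ?_)).2
    rw [norm_mul, norm_mul, norm_mul, hT, Complex.norm_conj]; ring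
  have hm : 0 ≤ (T * p).re := by
    have := norm_nonneg d
    by_contra! hneg
    nlinarith [mul_pos hc (neg_pos.mpr hneg)]
  have hvb0 : 0 ≤ ‖v‖ * ‖b‖ := by positivity
  rw [hre]
  nlinarith [mul_nonneg hm (sq_nonneg (c * ‖v‖ - ‖b‖)), mul_le_mul_of_nonneg_right h hvb0,
    mul_le_mul_of_nonneg_left hvb (sq_nonneg c)]

theorem IsCubicSol.hasDerivAt_coneEnergy (hf : IsCubicSol a 0 f) (hz : z₀ + s * T ∈ slitPlane) :
    HasDerivAt (fun s : ℝ => coneEnergy c f (z₀ + s * T))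
      (c ^ 2 * (2 * (conj (f (z₀ + s * T)) * (T * (wkbDefect f (z₀ + s * T) +
        wkbSlope (z₀ + s * T) * f (z₀ + s * T)))).re) -
      2 * (conj (wkbDefect f (z₀ + s * T)) * (T * ((a - 21 / (16 * (z₀ + s * T) ^ 2)) *
        f (z₀ + s * T) - wkbSlope (z₀ + s * T) * wkbDefect f (z₀ + s * T)))).re) s := by
  have hline : HasDerivAt (fun s : ℝ => z₀ + s * T) T s := by
    simpa using ((hasDerivAt_id s).ofReal_comp.mul_const T).const_add z₀
  have hv := hasDerivAt_norm_sq (hasDerivAt_line hf.differentiable z₀ T s)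
  have hb := hasDerivAt_norm_sq ((hf.hasDerivAt_wkbDefect hz).comp s hline)
  refine ((hv.const_mul (c ^ 2)).sub hb).congr_deriv ?_
  simp only [Function.comp_apply, wkbDefect, sub_add_cancel, mul_comm _ T]

theorem IsCubicSol.coneEnergy_monotoneOn (hf : IsCubicSol a 0 f) (hT : ‖T‖ = 1) (hc : 0 < c)
    {S : Set ℝ} (hS : Convex ℝ S) (hslit : ∀ s ∈ S, z₀ + s * T ∈ slitPlane)
    (h : ∀ s ∈ S, ‖a - 21 / (16 * (z₀ + s * T) ^ 2)‖ + c ^ 2 ≤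
      2 * c * (T * wkbSlope (z₀ + s * T)).re) :
    MonotoneOn (fun s : ℝ => coneEnergy c f (z₀ + s * T)) S :=
  monotoneOn_of_hasDerivWithinAt_nonneg hS
    (fun s hs => (hf.hasDerivAt_coneEnergy (hslit s hs)).continuousAt.continuousWithinAt)
    (fun s hs => (hf.hasDerivAt_coneEnergy (hslit s (interior_subset hs))).hasDerivWithinAt)
    (fun s hs => cone_inequality hT hc (h s (interior_subset hs)))

end

/-- A direction in which `z ↦ z^(5/2)` has increasing real part throughout the first quadrant. -/
noncomputable def steepDir : ℂ :=
  exp (-(3 * Real.pi / 8 : ℝ) * I)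

/-- The cosine of the largest angle that `z^(3/2)`, for `z` in the first quadrant, makes with
the conjugate of `steepDir`. -/
noncomputable def steepCos : ℝ :=
  Real.cos (3 * Real.pi / 8)

/-- The closed first quadrant. -/
def quadrant : Set ℂ :=
  {z | 0 ≤ z.re ∧ 0 ≤ z.im}

/-- A lower bound for `Re (T z^(3/2))`, `T = steepDir`, that holds on the whole segment cut out by
the quadrant on the line in direction `T` through a point of modulus `r`. -/
noncomputable def slopeBound (r : ℝ) : ℝ :=
  steepCos * (steepCos * r) ^ (3 / 2 : ℝ)

theorem steepCos_pos : 0 < steepCos :=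
  Real.cos_pos_of_mem_Ioo ⟨by linarith [Real.pi_pos], by linarith [Real.pi_pos]⟩

theorem steepCos_le_one : steepCos ≤ 1 :=
  Real.cos_le_one _

theorem norm_steepDir : ‖steepDir‖ = 1 := by
  rw [steepDir, ← ofReal_neg]
  exact norm_exp_ofReal_mul_I _

theorem steepDir_re : steepDir.re = steepCos := by
  rw [steepDir, ← ofReal_neg, exp_ofReal_mul_I_re, Real.cos_neg, steepCos]

theorem steepDir_im : steepDir.im = -Real.sin (3 * Real.pi / 8) := by
  rw [steepDir, ← ofReal_neg, exp_ofReal_mul_I_im, Real.sin_neg]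

theorem steepCos_le_neg_steepDir_im : steepCos ≤ -steepDir.im := by
  rw [steepDir_im, neg_neg, steepCos, ← Real.sin_pi_div_two_sub]
  apply Real.sin_le_sin_of_le_of_le_pi_div_two <;> linarith [Real.pi_pos]

section

variable {a z w T : ℂ} {c s : ℝ}

theorem re_exp_mul_cpow_three_halves (τ : ℝ) (z : ℂ) :
    (exp (-τ * I) * z ^ (3 / 2 : ℂ)).re =
      ‖z‖ ^ (3 / 2 : ℝ) * Real.cos (3 / 2 * arg z - τ) := by
  have hz : z ^ (3 / 2 : ℂ) =
      (‖z‖ ^ (3 / 2 : ℝ) : ℝ) * exp ((3 / 2 * arg z : ℝ) * I) := by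
    have := cpow_ofReal z (3 / 2)
    rw [exp_mul_I, mul_comm (3 / 2 : ℝ)]
    push_cast at this ⊢
    exact this
  rw [hz, mul_left_comm, ← exp_add, ← add_mul, ← ofReal_neg, ← ofReal_add, re_ofReal_mul,
    exp_ofReal_mul_I_re, neg_add_eq_sub]

theorem arg_mem_of_mem_quadrant (hz : z ∈ quadrant) : arg z ∈ Icc 0 (Real.pi / 2) :=
  ⟨arg_nonneg_iff.mpr hz.2, arg_le_pi_div_two_iff.mpr (.inl hz.1)⟩

theorem steepCos_le_cos {θ : ℝ} (hθ : |θ| ≤ 3 * Real.pi / 8) : steepCos ≤ Real.cos θ := by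
  rw [steepCos, ← Real.cos_abs θ]
  exact Real.cos_le_cos_of_nonneg_of_le_pi (abs_nonneg θ) (by linarith [Real.pi_pos]) hθ

theorem le_re_steepDir_mul_cpow (hz : z ∈ quadrant) :
    steepCos * ‖z‖ ^ (3 / 2 : ℝ) ≤ (steepDir * z ^ (3 / 2 : ℂ)).re := by
  obtain ⟨h0, h1⟩ := arg_mem_of_mem_quadrant hz
  rw [steepDir, re_exp_mul_cpow_three_halves, mul_comm]
  gcongr
  exact steepCos_le_cos (abs_le.mpr ⟨by linarith, by linarith⟩)

theorem le_re_neg_I_mul_cpow (hs : 0 < s) :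
    steepCos * ‖(s : ℂ) * I‖ ^ (3 / 2 : ℝ) ≤ (-I * (s * I) ^ (3 / 2 : ℂ)).re := by
  have hdir : -I = exp (-(Real.pi / 2 : ℝ) * I) := by
    rw [neg_mul, exp_neg]; push_cast; rw [exp_pi_div_two_mul_I, inv_I]
  rw [hdir, re_exp_mul_cpow_three_halves, arg_real_mul _ hs, arg_I, mul_comm]
  gcongr
  exact steepCos_le_cos (abs_le.mpr ⟨by linarith [Real.pi_pos], by linarith [Real.pi_pos]⟩)

theorem mem_slitPlane_of_mem_quadrant (hz : z ∈ quadrant) (hz1 : 1 ≤ ‖z‖) : z ∈ slitPlane := by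
  rw [mem_slitPlane_iff]
  by_contra! h
  have : z = 0 := Complex.ext (le_antisymm h.1 hz.1) h.2
  simp only [this, norm_zero] at hz1
  linarith

theorem re_mul_wkbSlope_ge (hT : ‖T‖ = 1) (hz1 : 1 ≤ ‖z‖)
    (hT' : steepCos * ‖z‖ ^ (3 / 2 : ℝ) ≤ (T * z ^ (3 / 2 : ℂ)).re) :
    steepCos * ‖z‖ ^ (3 / 2 : ℝ) - 1 ≤ (T * wkbSlope z).re := by
  have hz0 : z ≠ 0 := norm_pos_iff.mp (by linarith)
  have hsmall : (T * (3 / (4 * z))).re ≤ 1 := by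
    refine (re_le_norm _).trans ?_
    rw [norm_mul, hT, norm_div, norm_mul, one_mul, div_le_one (by simpa using hz0)]
    simp only [norm_ofNat]
    linarith
  rw [wkbSlope, mul_sub, sub_re]
  linarith

theorem norm_potential_sub_le (a : ℂ) (hz1 : 1 ≤ ‖z‖) :
    ‖a - 21 / (16 * z ^ 2)‖ ≤ ‖a‖ + 2 := by
  refine (norm_sub_le _ _).trans (add_le_add_right ?_ _)
  have hsq : 1 ≤ ‖z‖ ^ 2 := one_le_pow₀ hz1
  rw [norm_div, norm_mul, norm_pow, div_le_iff₀ (mul_pos (by simp) (by linarith))]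
  simp only [norm_ofNat]
  linarith

theorem cone_condition (hT : ‖T‖ = 1) (hz1 : 1 ≤ ‖z‖)
    (hT' : steepCos * ‖z‖ ^ (3 / 2 : ℝ) ≤ (T * z ^ (3 / 2 : ℂ)).re)
    (hc : 0 < c) (hc1 : c ≤ 1) (h : ‖a‖ + 5 ≤ c * (steepCos * ‖z‖ ^ (3 / 2 : ℝ))) :
    ‖a - 21 / (16 * z ^ 2)‖ + c ^ 2 ≤ 2 * c * (T * wkbSlope z).re := by
  have := norm_potential_sub_le a hz1
  have := mul_le_mul_of_nonneg_left (re_mul_wkbSlope_ge hT hz1 hT') hc.le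
  nlinarith [norm_nonneg a]

theorem steepCos_mul_norm_le (hz : z ∈ quadrant) (hzw : w = z + s * steepDir) :
    steepCos * ‖z‖ ≤ ‖w‖ := by
  have hκ := steepCos_pos
  have hN : -steepDir.im * w.re + steepCos * w.im = -steepDir.im * z.re + steepCos * z.im := by
    rw [hzw, ← steepDir_re]; simp only [add_re, add_im, re_ofReal_mul, im_ofReal_mul]; ring
  have hle : -steepDir.im * w.re + steepCos * w.im ≤ ‖w‖ := by
    have : (conj (I * steepDir) * w).re ≤ ‖w‖ := by
      refine (re_le_norm _).trans_eq ?_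
      rw [norm_mul, Complex.norm_conj, norm_mul, norm_I, norm_steepDir, one_mul, one_mul]
    simpa [steepDir_re, add_comm] using this
  calc steepCos * ‖z‖ ≤ steepCos * (z.re + z.im) := by
        gcongr
        simpa [abs_of_nonneg hz.1, abs_of_nonneg hz.2] using norm_le_abs_re_add_abs_im z
    _ ≤ -steepDir.im * z.re + steepCos * z.im := by
        rw [mul_add]; gcongr; exacts [hz.1, steepCos_le_neg_steepDir_im]
    _ ≤ ‖w‖ := hN ▸ hle

theorem slopeBound_le (hz : z ∈ quadrant) (hzw : w = z + s * steepDir) :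
    slopeBound ‖z‖ ≤ steepCos * ‖w‖ ^ (3 / 2 : ℝ) := by
  have := steepCos_pos
  rw [slopeBound]
  gcongr
  exact steepCos_mul_norm_le hz hzw

theorem tendsto_slopeBound : Tendsto slopeBound atTop atTop :=
  ((tendsto_rpow_atTop (by norm_num)).comp
    (tendsto_id.const_mul_atTop steepCos_pos)).const_mul_atTop steepCos_pos

theorem exists_mem_axis_add_mul_steepDir (hz : z ∈ quadrant) :
    ∃ s₀ s₁ : ℝ, 0 ≤ s₁ ∧ z = s₀ * I + s₁ * steepDir ∧
      ∀ s ∈ Icc 0 s₁, s₀ * I + s * steepDir ∈ quadrant := by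
  have hκ := steepCos_pos
  have him := hκ.le.trans steepCos_le_neg_steepDir_im
  have hs₁ : 0 ≤ z.re / steepCos := div_nonneg hz.1 hκ.le
  refine ⟨z.im - z.re / steepCos * steepDir.im, z.re / steepCos, hs₁, ?_, fun s hs => ⟨?_, ?_⟩⟩
  · apply Complex.ext
    · simp [steepDir_re, hκ.ne']
    · simp
  · simpa [steepDir_re] using mul_nonneg hs.1 hκ.le
  · have := mul_nonneg (sub_nonneg.mpr hs.2) him
    rw [add_im, im_ofReal_mul, im_ofReal_mul, I_im, mul_one]
    nlinarith [hz.2]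

end

section

variable {a z : ℂ} {c s s₀ : ℝ} {f : ℂ → ℂ}

theorem norm_ofReal_mul_I (hs : 0 ≤ s) : ‖(s : ℂ) * I‖ = s := by
  rw [norm_mul, norm_I, mul_one, norm_real, Real.norm_of_nonneg hs]

theorem rpow_three_halves_sq (hs : 0 ≤ s) : (s ^ (3 / 2 : ℝ)) ^ 2 = s ^ 3 := by
  rw [← Real.rpow_mul_natCast hs, ← Real.rpow_natCast]
  norm_num

theorem hasDerivAt_axis (hf : Differentiable ℂ f) (s : ℝ) :
    HasDerivAt (fun s : ℝ => f (s * I)) (I * deriv f (s * I)) s := by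
  simpa using hasDerivAt_line hf 0 I s

theorem IsCubicSol.hasDerivAt_axis_deriv (hf : IsCubicSol a 0 f) (s : ℝ) :
    HasDerivAt (fun s : ℝ => I * deriv f (s * I)) ((I * s ^ 3 - a) * f (s * I)) s := by
  have := hf.hasDerivAt_line_deriv 0 I s
  simp only [zero_add, Pi.zero_apply, add_zero] at this
  refine this.congr_deriv ?_
  linear_combination (s ^ 3 * I * (I ^ 2 - 1) + a) * f (s * I) * I_sq

theorem norm_wkbSlope_le (hz : 1 ≤ ‖z‖) : ‖wkbSlope z‖ ≤ 2 * ‖z‖ ^ (3 / 2 : ℝ) := by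
  have hpow : 1 ≤ ‖z‖ ^ (3 / 2 : ℝ) := Real.one_le_rpow hz (by norm_num)
  have hsmall : ‖3 / (4 * z)‖ ≤ 1 := by
    rw [norm_div, norm_mul, div_le_one (by simpa using norm_pos_iff.mp (by linarith))]
    simp only [norm_ofNat]
    linarith
  rw [wkbSlope]
  linarith [norm_sub_le (z ^ (3 / 2 : ℂ)) (3 / (4 * z)), norm_cpow_three_halves z]

theorem norm_wkbDefect_sq_le (f : ℂ → ℂ) (hz : 1 ≤ ‖z‖) :
    ‖wkbDefect f z‖ ^ 2 ≤ 2 * ‖deriv f z‖ ^ 2 + 8 * ‖z‖ ^ 3 * ‖f z‖ ^ 2 := by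
  have hP := norm_wkbSlope_le hz
  calc ‖wkbDefect f z‖ ^ 2 ≤ (‖deriv f z‖ + ‖wkbSlope z‖ * ‖f z‖) ^ 2 := by
        rw [← norm_mul]; gcongr; exact norm_sub_le _ _
    _ ≤ 2 * (‖deriv f z‖ ^ 2 + (‖wkbSlope z‖ * ‖f z‖) ^ 2) := add_sq_le
    _ ≤ 2 * (‖deriv f z‖ ^ 2 + (2 * ‖z‖ ^ (3 / 2 : ℝ) * ‖f z‖) ^ 2) := by gcongr
    _ = _ := by
        rw [mul_pow, mul_pow, rpow_three_halves_sq (norm_nonneg z)]; ring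

theorem axis_flux_coeff_ge (hs : 1 ≤ s) (hsa : ‖a‖ + 5 ≤ s ^ (3 / 2 : ℝ)) :
    s ^ 3 / 2 ≤ ((1 - I) * (I * s ^ 3 - a)).re := by
  have hs3 : (‖a‖ + 5) ^ 2 ≤ s ^ 3 := by
    rw [← rpow_three_halves_sq (by linarith)]; gcongr
  have hre : ((1 - I) * (I * s ^ 3 - a)).re = s ^ 3 - a.re - a.im := by
    simp [← ofReal_pow]; ring
  nlinarith [re_le_norm a, im_le_norm a, norm_nonneg a, sq_nonneg ‖a‖]

theorem IsCubicSol.coneEnergy_antitoneOn_axis (hf : IsCubicSol a 0 f) (hc : 0 < c) (hc1 : c ≤ 1)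
    (hs₀ : 1 ≤ s₀) (h : ‖a‖ + 5 ≤ c * (steepCos * s₀ ^ (3 / 2 : ℝ))) :
    AntitoneOn (fun s : ℝ => coneEnergy c f (s * I)) (Ici s₀) := by
  have hκ := steepCos_pos
  have hnorm : ∀ σ : ℝ, σ ∈ Iic (-s₀) → ‖((-σ : ℝ) : ℂ) * I‖ = -σ := fun σ hσ =>
    norm_ofReal_mul_I (by linarith [mem_Iic.mp hσ])
  have hpoint : ∀ σ : ℝ, (0 : ℂ) + σ * -I = (-σ : ℝ) * I := fun σ => by push_cast; ring
  have hmono := hf.coneEnergy_monotoneOn (z₀ := 0) (T := -I) (by simp) hc (convex_Iic (-s₀))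
    (fun σ hσ => ?_) (fun σ hσ => ?_)
  · intro s hs s' hs' hss'
    simpa [hpoint] using hmono (neg_le_neg (mem_Ici.mp hs')) (neg_le_neg (mem_Ici.mp hs))
      (neg_le_neg hss')
  all_goals
    have hσ' := mem_Iic.mp hσ
    rw [hpoint]
  · refine mem_slitPlane_of_mem_quadrant ⟨by simp, by rw [im_ofReal_mul, I_im]; linarith⟩ ?_
    rw [hnorm σ hσ]; linarith
  · refine cone_condition (by simp) (by rw [hnorm σ hσ]; linarith)
      (le_re_neg_I_mul_cpow (by linarith)) hc hc1 (h.trans ?_)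
    rw [hnorm σ hσ]
    gcongr
    linarith

theorem IsCubicSol.exists_axis_flux (hf : IsCubicSol a 0 f) (hs₀ : 1 ≤ s₀)
    (h : ‖a‖ + 5 ≤ s₀ ^ (3 / 2 : ℝ)) :
    ∃ K K' : ℝ → ℝ, ∀ s, s₀ ≤ s → HasDerivAt K (K' s) s ∧
      ‖deriv f (s * I)‖ ^ 2 + s ^ 3 / 2 * ‖f (s * I)‖ ^ 2 ≤ K' s ∧
      K s ^ 2 ≤ 2 * K' s * ‖f (s * I)‖ ^ 2 := by
  refine ⟨flux (1 - I) (fun s => f (s * I)) (fun s => I * deriv f (s * I)),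
    fun s => (1 - I : ℂ).re * ‖I * deriv f (s * I)‖ ^ 2 +
      ((1 - I) * (I * s ^ 3 - a)).re * ‖f (s * I)‖ ^ 2, fun s hs => ?_⟩
  have hs0 : 0 ≤ s := by linarith
  have hK' : ‖deriv f (s * I)‖ ^ 2 + s ^ 3 / 2 * ‖f (s * I)‖ ^ 2 ≤
      (1 - I : ℂ).re * ‖I * deriv f (s * I)‖ ^ 2 +
        ((1 - I) * (I * s ^ 3 - a)).re * ‖f (s * I)‖ ^ 2 := by
    have := axis_flux_coeff_ge (hs₀.trans hs) (h.trans (by gcongr))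
    simp only [norm_mul, norm_I, one_mul, sub_re, one_re, I_re, sub_zero]
    gcongr
  refine ⟨hasDerivAt_flux (hasDerivAt_axis hf.differentiable s) (hf.hasDerivAt_axis_deriv s),
    hK', ?_⟩
  have hζ : ‖(1 - I : ℂ)‖ ^ 2 = 2 := by rw [← normSq_eq_norm_sq, normSq_apply]; norm_num
  have hs3 : 0 ≤ s ^ 3 / 2 * ‖f (s * I)‖ ^ 2 := by positivity
  calc flux (1 - I) (fun s => f (s * I)) (fun s => I * deriv f (s * I)) s ^ 2
      ≤ (‖(1 - I : ℂ)‖ * (‖f (s * I)‖ * ‖I * deriv f (s * I)‖)) ^ 2 :=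
        sq_le_sq.mpr ((abs_flux_le _ _ _ _).trans (le_abs_self _))
    _ = 2 * ‖deriv f (s * I)‖ ^ 2 * ‖f (s * I)‖ ^ 2 := by
        rw [mul_pow, hζ, norm_mul, norm_I]; ring
    _ ≤ _ := by gcongr; linarith

theorem IsCubicSol.coneEnergy_axis_nonneg (hf : IsCubicSol a 0 f) (hL : AxisL2 f) (hc : 0 < c)
    (hc1 : c ≤ 1) (hs₀ : 1 ≤ s₀) (h : ‖a‖ + 5 ≤ c * (steepCos * s₀ ^ (3 / 2 : ℝ))) :
    0 ≤ coneEnergy c f (s₀ * I) := by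
  by_contra! hneg
  have hκ := steepCos_pos
  have hanti := hf.coneEnergy_antitoneOn_axis hc hc1 hs₀ h
  obtain ⟨K, K', hK⟩ := hf.exists_axis_flux hs₀ <| by
    calc ‖a‖ + 5 ≤ c * (steepCos * s₀ ^ (3 / 2 : ℝ)) := h
      _ ≤ 1 * (1 * s₀ ^ (3 / 2 : ℝ)) := by gcongr; exact steepCos_le_one
      _ = s₀ ^ (3 / 2 : ℝ) := by ring
  refine not_integrable_of_sq_le_mul_deriv (ε := -coneEnergy c f (s₀ * I) / 16) (by linarith)
    zero_le_two (fun s hs => (hK s hs).1) (fun s hs => ?_) (fun s hs => (hK s hs).2.2)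
    (by have := hf.differentiable.continuous; fun_prop) hL
  have hs1 : 1 ≤ s := hs₀.trans hs
  have hnorm : ‖(s : ℂ) * I‖ = s := norm_ofReal_mul_I (zero_le_one.trans hs1)
  have hE : coneEnergy c f (s * I) ≤ coneEnergy c f (s₀ * I) := hanti self_mem_Ici hs hs
  have hdef := norm_wkbDefect_sq_le f (hnorm.symm ▸ hs1)
  have : 0 ≤ c ^ 2 * ‖f (s * I)‖ ^ 2 := by positivity
  rw [hnorm] at hdef
  rw [coneEnergy] at hE
  nlinarith [(hK s hs).2.1, sq_nonneg ‖deriv f (s * I)‖]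

end

/-! ### Growth across the first quadrant -/

section Decay

variable {y y' q q' : ℝ → ℂ}

theorem tendsto_zero_of_flux_le (hy : ∀ r, HasDerivAt y (y' r) r)
    (hflux : ∀ᶠ r in atTop, (conj (y r) * y' r).re ≤ -‖y r‖ ^ 2)
    (hy' : ∀ᶠ r in atTop, ‖y' r‖ ≤ 3 * r ^ 2 * ‖y r‖) :
    Tendsto y atTop (𝓝 0) ∧ Tendsto y' atTop (𝓝 0) := by
  obtain ⟨r₀, hr₀⟩ := eventually_atTop.mp hflux
  have hmono : MonotoneOn (fun r => -(‖y r‖ ^ 2 * Real.exp (r * 2))) (Ici r₀) := by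
    refine monotoneOn_Ici_of_hasDerivAt (fun r _ => ((hasDerivAt_norm_sq (hy r)).mul
      ((hasDerivAt_id r).mul_const 2).exp).neg) (fun r hr => ?_)
    have := mul_le_mul_of_nonneg_right (hr₀ r hr) (Real.exp_pos (r * 2)).le
    simp only [id_eq]
    linarith
  have hexp : ∀ r, r₀ ≤ r → ‖y r‖ ≤ ‖y r₀‖ * Real.exp r₀ * Real.exp (-r) := fun r hr => by
    have h : (‖y r‖ * Real.exp r) ^ 2 ≤ (‖y r₀‖ * Real.exp r₀) ^ 2 := by
      have := hmono self_mem_Ici hr hr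
      rw [mul_pow, mul_pow, ← Real.exp_nsmul, ← Real.exp_nsmul]
      simpa [mul_comm] using this
    rw [Real.exp_neg, ← div_eq_mul_inv, le_div_iff₀ (Real.exp_pos r)]
    exact (pow_le_pow_iff_left₀ (by positivity) (by positivity) two_ne_zero).mp h
  constructor
  · refine squeeze_zero_norm' (eventually_atTop.mpr ⟨r₀, hexp⟩) ?_
    simpa using Real.tendsto_exp_neg_atTop_nhds_zero.const_mul (‖y r₀‖ * Real.exp r₀)
  · have hlim := (Real.tendsto_pow_mul_exp_neg_atTop_nhds_zero 2).const_mul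
      (3 * (‖y r₀‖ * Real.exp r₀))
    rw [mul_zero] at hlim
    refine squeeze_zero_norm' ?_ hlim
    filter_upwards [hy', eventually_ge_atTop r₀] with r hr hr'
    calc ‖y' r‖ ≤ 3 * r ^ 2 * (‖y r₀‖ * Real.exp r₀ * Real.exp (-r)) :=
          hr.trans (by gcongr; exact hexp r hr')
      _ = _ := by ring

theorem frequently_lt_one_of_integrable {h : ℝ → ℝ} (hc : Continuous h) (hi : Integrable h) :
    ∃ᶠ s in atTop, h s < 1 := by
  intro hev
  obtain ⟨J, hJ, C, hC⟩ := exists_bounded_antideriv hc hi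
  obtain ⟨s₀, hs₀⟩ := eventually_atTop.mp hev
  have hJtop := tendsto_atTop_of_hasDerivAt_ge one_pos (fun s _ => hJ s)
    (fun s hs => not_lt.mp (hs₀ s hs))
  obtain ⟨s, hs⟩ := (hJtop.eventually_gt_atTop C).exists
  exact hs.not_ge ((le_abs_self _).trans (hC s))

theorem le_re_conj_mul_add_norm_sq {L b b' c c' : ℂ}
    (hL : ‖L‖ ^ 2 / 2 ≤ (conj L * (b * c' - b' * c)).re) (hb' : ‖b'‖ ≤ 1 / 2) :
    ‖L‖ ^ 2 / 4 ≤ (conj L * (b' * c + b * c')).re + ‖c‖ ^ 2 := by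
  have hsplit : conj L * (b' * c + b * c') =
      conj L * (b * c' - b' * c) + 2 * (conj L * (b' * c)) := by ring
  have hcross : -(‖L‖ * ‖b'‖ * ‖c‖) ≤ (conj L * (b' * c)).re := by
    simpa [mul_assoc] using (abs_le.mp (abs_re_le_norm (conj L * (b' * c)))).1
  have hsq : ‖b'‖ ^ 2 ≤ 1 / 4 := by nlinarith [norm_nonneg b']
  have h2re : (2 * (conj L * (b' * c))).re = 2 * (conj L * (b' * c)).re := by simp
  rw [hsplit, add_re, h2re]
  nlinarith [sq_nonneg (‖L‖ * ‖b'‖ - ‖c‖)]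

theorem wronskian_limit_eq_zero {L : ℂ} (hy : ∀ r, HasDerivAt y (y' r) r)
    (hq : ∀ r, HasDerivAt q (q' r) r) (hy0 : Tendsto y atTop (𝓝 0))
    (hy'0 : Tendsto y' atTop (𝓝 0)) (hqi : Integrable fun r => ‖q r‖ ^ 2)
    (hL : Tendsto (fun r => y r * q' r - y' r * q r) atTop (𝓝 L)) : L = 0 := by
  by_contra hL0
  have hqc : Continuous q := continuous_iff_continuousAt.mpr fun r => (hq r).continuousAt
  obtain ⟨J, hJ, C, hC⟩ := exists_bounded_antideriv (by fun_prop) hqi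
  have hL2 : 0 < ‖L‖ ^ 2 := by positivity
  have hre : ∀ᶠ r in atTop, ‖L‖ ^ 2 / 2 < (conj L * (y r * q' r - y' r * q r)).re := by
    have hlim := (continuous_re.tendsto _).comp (hL.const_mul (conj L))
    rw [conj_mul', ← ofReal_pow, ofReal_re] at hlim
    exact hlim.eventually_const_lt (half_lt_self hL2)
  have hsmall : ∀ᶠ r in atTop, ‖y' r‖ < 1 / 2 :=
    (tendsto_zero_iff_norm_tendsto_zero.mp hy'0).eventually_lt_const one_half_pos
  obtain ⟨s₀, hs₀⟩ := eventually_atTop.mp (hre.and hsmall)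
  have hK : Tendsto (fun r => (conj L * (y r * q r)).re + J r) atTop atTop := by
    refine tendsto_atTop_of_hasDerivAt_ge (ε := ‖L‖ ^ 2 / 4) (s₀ := s₀) (by positivity)
      (fun r _ => (reCLM.hasFDerivAt.comp_hasDerivAt r
        (((hy r).mul (hq r)).const_mul (conj L))).add (hJ r)) (fun r hr => ?_)
    exact le_re_conj_mul_add_norm_sq (hs₀ r hr).1.le (hs₀ r hr).2.le
  have hq1 : ∀ᶠ r in atTop, 1 ≤ ‖q r‖ ^ 2 := by
    have hLy : ∀ᶠ r in atTop, ‖L‖ * ‖y r‖ < 1 := by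
      refine Tendsto.eventually_lt_const one_pos ?_
      simpa using (tendsto_zero_iff_norm_tendsto_zero.mp hy0).const_mul ‖L‖
    filter_upwards [hLy, hK.eventually_ge_atTop (C + 1)] with r hr hr'
    have hbound : (conj L * (y r * q r)).re ≤ ‖L‖ * ‖y r‖ * ‖q r‖ := by
      simpa [mul_assoc] using re_le_norm (conj L * (y r * q r))
    refine one_le_pow₀ ?_
    nlinarith [(abs_le.mp (hC r)).2, norm_nonneg (q r)]
  obtain ⟨r, hlt, hge⟩ :=
    ((frequently_lt_one_of_integrable (by fun_prop) hqi).and_eventually hq1).exists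
  exact hlt.not_ge hge

end Decay

section

variable {a z : ℂ} {c : ℝ} {f : ℂ → ℂ}

theorem IsCubicSol.coneEnergy_nonneg (hf : IsCubicSol a 0 f) (hL : AxisL2 f) (hc : 0 < c)
    (hc1 : c ≤ 1) (hz : z ∈ quadrant) (hz1 : 1 ≤ steepCos * ‖z‖)
    (h : ‖a‖ + 5 ≤ c * slopeBound ‖z‖) : 0 ≤ coneEnergy c f z := by
  obtain ⟨s₀, s₁, hs₁, hzs, hseg⟩ := exists_mem_axis_add_mul_steepDir hz
  have hpoint : ∀ s : ℝ, s₀ * I + s * steepDir = z + (s - s₁ : ℝ) * steepDir := fun s => by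
    rw [hzs]; push_cast; ring
  have hnorm : ∀ s : ℝ, 1 ≤ ‖s₀ * I + s * steepDir‖ := fun s =>
    hz1.trans (steepCos_mul_norm_le hz (hpoint s))
  have hslope : ∀ s : ℝ, ‖a‖ + 5 ≤ c * (steepCos * ‖s₀ * I + s * steepDir‖ ^ (3 / 2 : ℝ)) :=
    fun s => h.trans (by gcongr; exact slopeBound_le hz (hpoint s))
  have hmono := hf.coneEnergy_monotoneOn norm_steepDir hc (convex_Icc 0 s₁)
    (fun s hs => mem_slitPlane_of_mem_quadrant (hseg s hs) (hnorm s))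
    (fun s hs => cone_condition norm_steepDir (hnorm s) (le_re_steepDir_mul_cpow (hseg s hs)) hc
      hc1 (hslope s))
  have hs₀ : ‖(s₀ : ℂ) * I + (0 : ℝ) * steepDir‖ = s₀ := by
    have := (hseg 0 ⟨le_rfl, hs₁⟩).2
    simp only [ofReal_zero, zero_mul, add_zero] at this ⊢
    simpa using this
  have hslope₀ := hslope 0
  rw [hs₀] at hslope₀
  have haxis := hf.coneEnergy_axis_nonneg hL hc hc1 (hs₀ ▸ hnorm 0) hslope₀
  have hle := hmono ⟨le_rfl, hs₁⟩ ⟨hs₁, le_rfl⟩ hs₁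
  simp only [ofReal_zero, zero_mul, add_zero] at hle
  rw [hzs]
  exact haxis.trans hle

end

/-- The Wronskian `f p' - f' p`. -/
noncomputable def wronskian (f p : ℂ → ℂ) (z : ℂ) : ℂ :=
  f z * deriv p z - deriv f z * p z

section

variable {a z z₀ T : ℂ} {m s₀ s₁ : ℝ} {f g p : ℂ → ℂ}

theorem hasDerivAt_wronskian (hf : IsCubicSol a 0 f) (hp : IsCubicSol a g p) (z : ℂ) :
    HasDerivAt (wronskian f p) (f z * g z) z := by
  refine (((hf.differentiable z).hasDerivAt.mul (hp.differentiable.deriv z).hasDerivAt).sub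
    ((hf.differentiable.deriv z).hasDerivAt.mul (hp.differentiable z).hasDerivAt)).congr_deriv ?_
  rw [hf.deriv_deriv_homogeneous, hp.deriv_deriv]
  ring

theorem differentiable_wronskian (hf : IsCubicSol a 0 f) (hp : IsCubicSol a g p) :
    Differentiable ℂ (wronskian f p) :=
  fun z => (hasDerivAt_wronskian hf hp z).differentiableAt

/-- Where `‖f‖²` grows at the logarithmic rate `2m`, it dominates `2m` times the integral of
`‖f²‖ = ‖(wronskian f p)'‖`. -/
theorem norm_wronskian_sub_le (hf : IsCubicSol a 0 f) (hp : IsCubicSol a f p) (hT : ‖T‖ = 1)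
    (hm : 0 < m) (hs : s₀ ≤ s₁)
    (hgrow : ∀ s ∈ Ico s₀ s₁,
      m * ‖f (z₀ + s * T)‖ ^ 2 ≤ (conj (f (z₀ + s * T)) * (T * deriv f (z₀ + s * T))).re) :
    2 * m * ‖wronskian f p (z₀ + s₁ * T)‖ + ‖f (z₀ + s₀ * T)‖ ^ 2 ≤
      2 * m * ‖wronskian f p (z₀ + s₀ * T)‖ + ‖f (z₀ + s₁ * T)‖ ^ 2 := by
  have hω := hasDerivAt_line (differentiable_wronskian hf hp) z₀ T
  have hf' := fun s => hasDerivAt_norm_sq (hasDerivAt_line hf.differentiable z₀ T s)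
  have key := image_norm_le_of_norm_deriv_right_le_deriv_boundary
    (B := fun s : ℝ => ‖wronskian f p (z₀ + s₀ * T)‖ +
      (‖f (z₀ + s * T)‖ ^ 2 - ‖f (z₀ + s₀ * T)‖ ^ 2) * (2 * m)⁻¹)
    (fun s _ => (hω s).continuousAt.continuousWithinAt) (fun s _ => (hω s).hasDerivWithinAt)
    (by simp) (fun s => (((hf' s).sub_const _).mul_const _).const_add _) (fun s hs => ?_)
    ⟨hs, le_rfl⟩
  · have hinv : (2 * m) * (2 * m)⁻¹ = 1 := mul_inv_cancel₀ (by positivity)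
    linear_combination 2 * m * key +
      (‖f (z₀ + s₁ * T)‖ ^ 2 - ‖f (z₀ + s₀ * T)‖ ^ 2) * hinv
  · rw [(hasDerivAt_wronskian hf hp _).deriv, norm_mul, hT, norm_mul, one_mul,
      ← div_eq_mul_inv, le_div_iff₀ (by positivity)]
    linarith [hgrow s hs]

theorem growth_of_coneEnergy_nonneg (hT : ‖T‖ = 1) (hcone : 0 ≤ coneEnergy 1 f z)
    (hslope : m + 1 ≤ (T * wkbSlope z).re) :
    m * ‖f z‖ ^ 2 ≤ (conj (f z) * (T * deriv f z)).re := by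
  rw [coneEnergy_nonneg_iff zero_le_one, one_mul] at hcone
  have hsplit : conj (f z) * (T * deriv f z) =
      T * wkbSlope z * (‖f z‖ ^ 2 : ℝ) + conj (f z) * (T * wkbDefect f z) := by
    push_cast
    rw [← conj_mul', wkbDefect]
    ring
  have herr : -‖f z‖ ^ 2 ≤ (conj (f z) * (T * wkbDefect f z)).re := by
    refine le_trans ?_ (abs_le.mp (abs_re_le_norm _)).1
    rw [norm_mul, norm_mul, hT, Complex.norm_conj, one_mul, sq]
    gcongr
  rw [hsplit, add_re, re_mul_ofReal]
  nlinarith [sq_nonneg ‖f z‖]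

end

section

variable {a z w : ℂ} {s s₀ : ℝ} {f p : ℂ → ℂ}

theorem tendsto_steepCos_mul_rpow :
    Tendsto (fun s : ℝ => steepCos * s ^ (3 / 2 : ℝ)) atTop atTop :=
  (tendsto_rpow_atTop (by norm_num)).const_mul_atTop steepCos_pos

theorem IsCubicSol.axis_growth (hf : IsCubicSol a 0 f) (hL : AxisL2 f) (hs₀ : 1 ≤ s₀)
    (h : ‖a‖ + 5 ≤ steepCos * s₀ ^ (3 / 2 : ℝ)) (hs : s₀ ≤ s) :
    (steepCos * s₀ ^ (3 / 2 : ℝ) - 2) * ‖f (s * I)‖ ^ 2 ≤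
      (conj (f (s * I)) * (-I * deriv f (s * I))).re := by
  have hκ := steepCos_pos
  have hs1 : 1 ≤ s := hs₀.trans hs
  have hnorm : ‖(s : ℂ) * I‖ = s := norm_ofReal_mul_I (by linarith)
  have hpow : steepCos * s₀ ^ (3 / 2 : ℝ) ≤ steepCos * s ^ (3 / 2 : ℝ) := by gcongr
  refine growth_of_coneEnergy_nonneg (by simp)
    (hf.coneEnergy_axis_nonneg hL one_pos le_rfl hs1 (by linarith)) ?_
  have := re_mul_wkbSlope_ge (T := -I) (z := s * I) (by simp) (by rwa [hnorm])
    (le_re_neg_I_mul_cpow (by linarith))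
  rw [hnorm] at this
  linarith

theorem IsCubicSol.tendsto_axis_zero (hf : IsCubicSol a 0 f) (hL : AxisL2 f) :
    Tendsto (fun s : ℝ => f (s * I)) atTop (𝓝 0) ∧
      Tendsto (fun s : ℝ => I * deriv f (s * I)) atTop (𝓝 0) := by
  have hlarge := (tendsto_steepCos_mul_rpow.eventually_ge_atTop (‖a‖ + 5)).and
    (eventually_ge_atTop 1)
  refine tendsto_zero_of_flux_le (hasDerivAt_axis hf.differentiable) ?_ ?_
  · filter_upwards [hlarge] with s hs
    have hgrow := hf.axis_growth hL hs.2 hs.1 le_rfl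
    have hneg : (conj (f (s * I)) * (I * deriv f (s * I))).re =
        -(conj (f (s * I)) * (-I * deriv f (s * I))).re := by
      rw [neg_mul, mul_neg, neg_re, neg_neg]
    nlinarith [norm_nonneg a, sq_nonneg ‖f (s * I)‖, hs.1]
  · filter_upwards [hlarge] with s ⟨hs, hs1⟩
    have hnorm : ‖(s : ℂ) * I‖ = s := norm_ofReal_mul_I (by linarith)
    have hcone := (coneEnergy_nonneg_iff zero_le_one).mp
      (hf.coneEnergy_axis_nonneg hL one_pos le_rfl hs1 (by linarith))
    have hP := norm_wkbSlope_le (hnorm.symm ▸ hs1)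
    have hpow : s ^ (3 / 2 : ℝ) ≤ s ^ 2 := by
      rw [← Real.rpow_two]; exact Real.rpow_le_rpow_of_exponent_le hs1 (by norm_num)
    have hsplit : deriv f (s * I) = wkbSlope (s * I) * f (s * I) + wkbDefect f (s * I) := by
      rw [wkbDefect]; ring
    rw [hnorm] at hP
    calc ‖I * deriv f (s * I)‖ ≤ ‖wkbSlope (s * I)‖ * ‖f (s * I)‖ + 1 * ‖f (s * I)‖ := by
          rw [norm_mul, norm_I, one_mul, hsplit, ← norm_mul]
          exact (norm_add_le _ _).trans (by gcongr)
      _ ≤ 2 * s ^ 2 * ‖f (s * I)‖ + s ^ 2 * ‖f (s * I)‖ := by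
          gcongr
          · linarith
          · exact one_le_pow₀ hs1
      _ = 3 * s ^ 2 * ‖f (s * I)‖ := by ring

theorem tendsto_wronskian_axis_zero (hf : IsCubicSol a 0 f) (hp : IsCubicSol a f p)
    (hfL : AxisL2 f) (hpL : AxisL2 p) :
    Tendsto (fun s : ℝ => wronskian f p (s * I)) atTop (𝓝 0) := by
  obtain ⟨hf0, hf'0⟩ := hf.tendsto_axis_zero hfL
  have hderiv : ∀ s : ℝ, HasDerivAt (fun s : ℝ => wronskian f p (s * I))
      (I * (f (s * I) * f (s * I))) s := fun s => by
    have := hasDerivAt_axis (differentiable_wronskian hf hp) s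
    rwa [(hasDerivAt_wronskian hf hp _).deriv] at this
  have hint : Integrable fun s : ℝ => I * (f (s * I) * f (s * I)) := by
    have hcont := hf.differentiable.continuous
    refine hfL.mono (by fun_prop) (.of_forall fun s => ?_)
    simp [sq]
  have hlim := tendsto_limUnder_of_hasDerivAt_of_integrableOn_Ioi (a := 0)
    (fun s _ => hderiv s) hint.integrableOn
  have hzero := wronskian_limit_eq_zero (L := I * limUnder atTop fun s : ℝ => wronskian f p (s * I))
    (hasDerivAt_axis hf.differentiable) (hasDerivAt_axis hp.differentiable) hf0 hf'0 hpL
    ((hlim.const_mul I).congr fun s => by rw [wronskian]; ring)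
  rwa [(mul_eq_zero.mp hzero).resolve_left I_ne_zero] at hlim

theorem norm_wronskian_axis_le (hf : IsCubicSol a 0 f) (hp : IsCubicSol a f p)
    (hfL : AxisL2 f) (hpL : AxisL2 p) (hs₀ : 1 ≤ s₀)
    (h : ‖a‖ + 5 ≤ steepCos * s₀ ^ (3 / 2 : ℝ)) :
    2 * (steepCos * s₀ ^ (3 / 2 : ℝ) - 2) * ‖wronskian f p (s₀ * I)‖ ≤ ‖f (s₀ * I)‖ ^ 2 := by
  have hm : 0 < steepCos * s₀ ^ (3 / 2 : ℝ) - 2 := by linarith [norm_nonneg a]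
  have hpoint : ∀ s : ℝ, (0 : ℂ) + (-s : ℝ) * -I = s * I := fun s => by push_cast; ring
  have hlim := ((tendsto_wronskian_axis_zero hf hp hfL hpL).norm.const_mul
    (2 * (steepCos * s₀ ^ (3 / 2 : ℝ) - 2))).add_const (‖f (s₀ * I)‖ ^ 2)
  rw [norm_zero, mul_zero, zero_add] at hlim
  refine ge_of_tendsto hlim ?_
  filter_upwards [eventually_ge_atTop s₀] with s hs
  have := norm_wronskian_sub_le (z₀ := 0) (T := -I) hf hp (by simp) hm (neg_le_neg hs)
    (fun σ hσ => by
      rw [← neg_neg σ, hpoint]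
      exact hf.axis_growth hfL hs₀ h (by linarith [hσ.2]))
  rw [hpoint, hpoint] at this
  linarith [sq_nonneg ‖f (s * I)‖]

theorem slopeBound_le_slopeBound {r r' : ℝ} (hr : 0 ≤ r) (h : r ≤ r') :
    slopeBound r ≤ slopeBound r' := by
  have := steepCos_pos
  rw [slopeBound, slopeBound]
  gcongr

theorem IsCubicSol.segment_growth (hf : IsCubicSol a 0 f) (hL : AxisL2 f) (hz : z ∈ quadrant)
    (hw : w ∈ quadrant) (hzw : w = z + s * steepDir) (hz1 : 1 ≤ steepCos * (steepCos * ‖z‖))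
    (h : ‖a‖ + 5 ≤ slopeBound (steepCos * ‖z‖)) :
    (slopeBound ‖z‖ - 2) * ‖f w‖ ^ 2 ≤ (conj (f w) * (steepDir * deriv f w)).re := by
  have hκ := steepCos_pos
  have hnorm : steepCos * ‖z‖ ≤ ‖w‖ := steepCos_mul_norm_le hz hzw
  have hw1 : 1 ≤ steepCos * ‖w‖ := hz1.trans (by gcongr)
  have hw2 : steepCos * ‖w‖ ≤ ‖w‖ := mul_le_of_le_one_left (norm_nonneg w) steepCos_le_one
  have hmono := slopeBound_le_slopeBound (by positivity) hnorm
  refine growth_of_coneEnergy_nonneg norm_steepDir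
    (hf.coneEnergy_nonneg hL one_pos le_rfl hw hw1 (by linarith)) ?_
  linarith [re_mul_wkbSlope_ge norm_steepDir (hw1.trans hw2) (le_re_steepDir_mul_cpow hw),
    slopeBound_le hz hzw]

theorem norm_wronskian_le (hf : IsCubicSol a 0 f) (hp : IsCubicSol a f p)
    (hfL : AxisL2 f) (hpL : AxisL2 p) (hz : z ∈ quadrant)
    (hz1 : 1 ≤ steepCos * (steepCos * ‖z‖)) (h : ‖a‖ + 5 ≤ slopeBound (steepCos * ‖z‖)) :
    2 * (slopeBound ‖z‖ - 2) * ‖wronskian f p z‖ ≤ ‖f z‖ ^ 2 := by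
  have hκ := steepCos_pos
  obtain ⟨s₀, s₁, hs₁, hzs, hseg⟩ := exists_mem_axis_add_mul_steepDir hz
  have hpoint : ∀ s : ℝ, s₀ * I + s * steepDir = z + (s - s₁ : ℝ) * steepDir := fun s => by
    rw [hzs]; push_cast; ring
  have hs₀ : s₀ * I = z + (0 - s₁ : ℝ) * steepDir := by simpa using hpoint 0
  have hs₀0 : 0 ≤ s₀ := by simpa using (hseg 0 ⟨le_rfl, hs₁⟩).2
  have hz2 : steepCos * (steepCos * ‖z‖) ≤ steepCos * ‖z‖ :=
    mul_le_of_le_one_left (by positivity) steepCos_le_one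
  have hz3 : steepCos * ‖z‖ ≤ ‖z‖ := mul_le_of_le_one_left (norm_nonneg z) steepCos_le_one
  have hslope := slopeBound_le_slopeBound (by positivity) hz3
  have hM : slopeBound ‖z‖ ≤ steepCos * s₀ ^ (3 / 2 : ℝ) := by
    simpa only [norm_ofReal_mul_I hs₀0] using slopeBound_le hz hs₀
  have hs₀1 : 1 ≤ s₀ := by
    have := steepCos_mul_norm_le hz hs₀
    rw [norm_ofReal_mul_I hs₀0] at this
    linarith
  have haxis := norm_wronskian_axis_le hf hp hfL hpL hs₀1 (by linarith)
  have hgrow := norm_wronskian_sub_le (m := slopeBound ‖z‖ - 2) hf hp norm_steepDir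
    (by linarith [norm_nonneg a]) hs₁ (fun s hs => hf.segment_growth hfL hz
      (hseg s ⟨hs.1, hs.2.le⟩) (hpoint s) hz1 h)
  rw [← hzs] at hgrow
  simp only [ofReal_zero, zero_mul, add_zero] at hgrow
  have : (slopeBound ‖z‖ - 2) * ‖wronskian f p (s₀ * I)‖ ≤
      (steepCos * s₀ ^ (3 / 2 : ℝ) - 2) * ‖wronskian f p (s₀ * I)‖ := by gcongr
  linarith

end

/-! ### The decay ray -/

/-- The direction `exp (2πi/5)`, in which square-integrable solutions decay. -/
noncomputable def rayDir : ℂ :=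
  exp ((2 * Real.pi / 5 : ℝ) * I)

theorem rayDir_pow_five : rayDir ^ 5 = 1 := by
  rw [rayDir, ← exp_nat_mul, ← exp_two_pi_mul_I]
  congr 1
  push_cast
  ring

theorem norm_rayDir : ‖rayDir‖ = 1 :=
  norm_exp_ofReal_mul_I _

theorem rayDir_ne_zero : rayDir ≠ 0 :=
  exp_ne_zero _

theorem ofReal_mul_rayDir_mem_quadrant {r : ℝ} (hr : 0 ≤ r) : rayDir * r ∈ quadrant := by
  have hπ := Real.pi_pos
  constructor
  · rw [re_mul_ofReal, rayDir, exp_ofReal_mul_I_re]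
    exact mul_nonneg (Real.cos_nonneg_of_mem_Icc ⟨by linarith, by linarith⟩) hr
  · rw [im_mul_ofReal, rayDir, exp_ofReal_mul_I_im]
    exact mul_nonneg (Real.sin_nonneg_of_nonneg_of_le_pi (by linarith) (by linarith)) hr

theorem norm_rayDir_mul {r : ℝ} (hr : 0 ≤ r) : ‖rayDir * r‖ = r := by
  rw [norm_mul, norm_rayDir, one_mul, norm_real, Real.norm_of_nonneg hr]

theorem rayDir_mul_wkbSlope {r : ℝ} (hr : 0 < r) :
    rayDir * wkbSlope (rayDir * r) = -((r ^ (3 / 2 : ℝ) + 3 / (4 * r) : ℝ) : ℂ) := by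
  have harg : arg (rayDir * r) = 2 * Real.pi / 5 := by
    rw [mul_comm, arg_real_mul _ hr, rayDir,
      arg_exp_mul_I, toIocMod_eq_self]
    constructor <;> linarith [Real.pi_pos]
  have hpow : rayDir * (rayDir * r) ^ (3 / 2 : ℂ) = -((r ^ (3 / 2 : ℝ) : ℝ) : ℂ) := by
    have h := cpow_ofReal (rayDir * r) (3 / 2)
    rw [norm_rayDir_mul hr.le, harg, ofReal_cos, ofReal_sin, ← exp_mul_I] at h
    push_cast at h ⊢
    rw [h, mul_left_comm, rayDir, ← exp_add]
    have : ((2 * Real.pi / 5 : ℝ) : ℂ) * I + 2 * Real.pi / 5 * (3 / 2) * I = Real.pi * I := by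
      push_cast; ring
    rw [this, exp_pi_mul_I]
    ring
  have hr0 : (r : ℂ) ≠ 0 := ofReal_ne_zero.mpr hr.ne'
  have := rayDir_ne_zero
  rw [wkbSlope, mul_sub, hpow]
  push_cast
  field_simp
  ring

theorem exists_ofReal_eq_add_mul_steepDir {z : ℂ} (hz : z ∈ quadrant) :
    ∃ s₁ x : ℝ, 0 ≤ s₁ ∧ s₁ ≤ ‖z‖ / steepCos ∧ z + s₁ * steepDir = x ∧
      ∀ s ∈ Icc 0 s₁, z + s * steepDir ∈ quadrant := by
  have hκ := steepCos_pos
  have hκ' := steepCos_le_neg_steepDir_im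
  have him : 0 < -steepDir.im := hκ.trans_le hκ'
  obtain ⟨s₁, hs₁⟩ : ∃ s₁, s₁ * -steepDir.im = z.im :=
    ⟨z.im / -steepDir.im, div_mul_cancel₀ _ him.ne'⟩
  have hs₁0 : 0 ≤ s₁ := by by_contra! h; nlinarith [hz.2]
  refine ⟨s₁, z.re + s₁ * steepCos, hs₁0, ?_, ?_, fun s hs => ⟨?_, ?_⟩⟩
  · rw [le_div_iff₀ hκ]
    exact (mul_le_mul_of_nonneg_left hκ' hs₁0).trans (hs₁.trans_le (im_le_norm z))
  · apply Complex.ext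
    · simp [steepDir_re]
    · simp only [add_im, im_ofReal_mul, ofReal_im]; linarith
  · simpa [steepDir_re] using add_nonneg hz.1 (mul_nonneg hs.1 hκ.le)
  · have := mul_le_mul_of_nonneg_right hs.2 him.le
    simp only [add_im, im_ofReal_mul]
    linarith

theorem tendsto_div_slopeBound :
    Tendsto (fun r => r / slopeBound (steepCos * r)) atTop (𝓝 0) := by
  have hκ := steepCos_pos
  have hlim := (tendsto_rpow_neg_atTop (y := 1 / 2) (by norm_num)).const_mul
    (steepCos * (steepCos * steepCos) ^ (3 / 2 : ℝ))⁻¹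
  rw [mul_zero] at hlim
  refine hlim.congr' ?_
  filter_upwards [eventually_gt_atTop 0] with r hr
  have hsplit : r = r ^ (3 / 2 : ℝ) * r ^ (-(1 / 2) : ℝ) := by
    rw [← Real.rpow_add hr]; norm_num
  rw [slopeBound, ← mul_assoc steepCos, Real.mul_rpow (by positivity) hr.le, eq_div_iff
    (by positivity)]
  conv_rhs => rw [hsplit]
  field_simp

section

variable {a : ℂ} {f p : ℂ → ℂ}

theorem eventually_norm_wronskian_le (hf : IsCubicSol a 0 f) (hp : IsCubicSol a f p)
    (hfL : AxisL2 f) (hpL : AxisL2 p) :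
    ∀ᶠ r in atTop, ∀ z ∈ quadrant, r ≤ ‖z‖ → slopeBound r * ‖wronskian f p z‖ ≤ ‖f z‖ ^ 2 := by
  have hκ := steepCos_pos
  have hid := tendsto_id.const_mul_atTop hκ
  filter_upwards [tendsto_slopeBound.eventually_ge_atTop 4, eventually_ge_atTop 0,
    (tendsto_slopeBound.comp hid).eventually_ge_atTop (‖a‖ + 5),
    (hid.const_mul_atTop hκ).eventually_ge_atTop 1] with r hr4 hr0 hra hr1 z hz hrz
  have hmono := slopeBound_le_slopeBound hr0 hrz
  have := norm_wronskian_le hf hp hfL hpL hz (hr1.trans (by simp only [id]; gcongr))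
    (hra.trans (slopeBound_le_slopeBound (by simp only [id]; positivity)
      (by simp only [id]; gcongr)))
  nlinarith [norm_nonneg (wronskian f p z)]

theorem eventually_norm_wkbDefect_le (hf : IsCubicSol a 0 f) (hL : AxisL2 f) :
    ∀ᶠ r in atTop, ∀ z ∈ quadrant, r ≤ ‖z‖ →
      slopeBound r * ‖wkbDefect f z‖ ≤ (‖a‖ + 5) * ‖f z‖ := by
  have hκ := steepCos_pos
  filter_upwards [eventually_ge_atTop 0, tendsto_slopeBound.eventually_ge_atTop (‖a‖ + 5),
    (tendsto_id.const_mul_atTop hκ).eventually_ge_atTop 1] with r hr0 hra hr1 z hz hrz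
  have ha5 : 0 < ‖a‖ + 5 := by linarith [norm_nonneg a]
  have hpos : 0 < slopeBound r := ha5.trans_le hra
  have hcone := hf.coneEnergy_nonneg hL (div_pos ha5 hpos) ((div_le_one hpos).mpr hra) hz
    (hr1.trans (by simp only [id]; gcongr)) (by
      rw [div_mul_eq_mul_div, le_div_iff₀ hpos]
      gcongr
      exact slopeBound_le_slopeBound hr0 hrz)
  rw [coneEnergy_nonneg_iff (by positivity), div_mul_eq_mul_div, le_div_iff₀ hpos] at hcone
  linarith

theorem eventually_ne_zero (hf : IsCubicSol a 0 f) (hL : AxisL2 f) (hne : f ≠ 0) :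
    ∀ᶠ r in atTop, ∀ z ∈ quadrant, r ≤ ‖z‖ → f z ≠ 0 := by
  filter_upwards [eventually_norm_wkbDefect_le hf hL, tendsto_slopeBound.eventually_gt_atTop 0]
    with r hr hpos z hz hrz h0
  refine hne (hf.eq_zero_of_deriv_eq_zero h0 ?_)
  have := hr z hz hrz
  rw [wkbDefect, h0, mul_zero, sub_zero, norm_zero, mul_zero] at this
  exact norm_le_zero_iff.mp (nonpos_of_mul_nonpos_right this hpos)

end

theorem hasDerivAt_log_norm {y : ℝ → ℂ} {y' : ℂ} {r : ℝ} (hy : HasDerivAt y y' r)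
    (h0 : y r ≠ 0) : HasDerivAt (fun s => Real.log ‖y s‖) (y' / y r).re r := by
  have hsq := ((hasDerivAt_norm_sq hy).log (by positivity)).const_mul (1 / 2)
  refine (hsq.congr_deriv ?_).congr_of_eventuallyEq (.of_forall fun s => ?_)
  · have hdiv : y' / y r = ((‖y r‖ ^ 2)⁻¹ : ℝ) * (conj (y r) * y') := by
      have : conj (y r) ≠ 0 := (map_ne_zero _).mpr h0
      rw [ofReal_inv, ofReal_pow, ← conj_mul']
      field_simp
    rw [hdiv, re_ofReal_mul]
    ring
  · simp [Real.log_pow]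

section

variable {E : Type*} [NormedAddCommGroup E] [NormedSpace ℝ E] {G G' : ℂ → E}

theorem exists_norm_sub_ray_le {C r : ℝ} (hr : 0 ≤ r)
    (hG : ∀ z ∈ quadrant, steepCos * r ≤ ‖z‖ →
      HasDerivAt (fun s : ℝ => G (z + s * steepDir)) (G' z) 0 ∧ ‖G' z‖ ≤ C) :
    ∃ x : ℝ, ‖G x - G (rayDir * r)‖ ≤ C * (r / steepCos) := by
  have hquad := ofReal_mul_rayDir_mem_quadrant hr
  have hnorm := norm_rayDir_mul hr
  obtain ⟨s₁, x, hs₁, hs₁', hend, hseg⟩ := exists_ofReal_eq_add_mul_steepDir hquad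
  have hpoint : ∀ s ∈ Icc 0 s₁, HasDerivAt (fun s : ℝ => G (rayDir * r + s * steepDir))
      (G' (rayDir * r + s * steepDir)) s ∧ ‖G' (rayDir * r + s * steepDir)‖ ≤ C := fun s hs => by
    have hfar := steepCos_mul_norm_le hquad (s := s) rfl
    rw [hnorm] at hfar
    obtain ⟨hd, hb⟩ := hG _ (hseg s hs) hfar
    refine ⟨(HasDerivAt.comp_sub_const s s (by rwa [sub_self])).congr_of_eventuallyEq
      (.of_forall fun σ => congrArg G ?_), hb⟩
    push_cast
    ring
  have key := norm_image_sub_le_of_norm_deriv_le_segment'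
    (fun s hs => (hpoint s hs).1.hasDerivWithinAt)
    (fun s hs => (hpoint s ⟨hs.1, hs.2.le⟩).2) s₁ ⟨hs₁, le_rfl⟩
  simp only [hend, ofReal_zero, zero_mul, add_zero, sub_zero] at key
  have hC : 0 ≤ C := (norm_nonneg _).trans (hpoint 0 ⟨le_rfl, hs₁⟩).2
  exact ⟨x, key.trans (by gcongr; rwa [hnorm] at hs₁')⟩

theorem exists_tendsto_ray_sub {C : ℝ}
    (hG : ∀ᶠ r in atTop, ∀ z ∈ quadrant, r ≤ ‖z‖ →
      HasDerivAt (fun s : ℝ => G (z + s * steepDir)) (G' z) 0 ∧ slopeBound r * ‖G' z‖ ≤ C) :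
    ∃ x : ℝ → ℝ, Tendsto (fun r : ℝ => G (x r) - G (rayDir * r)) atTop (𝓝 0) := by
  have hid := tendsto_id.const_mul_atTop steepCos_pos
  have hclose : ∀ᶠ r : ℝ in atTop, ∃ x : ℝ,
      ‖G x - G (rayDir * r)‖ ≤ C / steepCos * (r / slopeBound (steepCos * r)) := by
    filter_upwards [hid.eventually hG, (tendsto_slopeBound.comp hid).eventually_gt_atTop 0,
      eventually_ge_atTop 0] with r hr hpos hr0
    obtain ⟨x, hx⟩ := exists_norm_sub_ray_le hr0 fun z hz hrz =>
      ⟨(hr z hz hrz).1, (le_div_iff₀' hpos).mpr (hr z hz hrz).2⟩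
    exact ⟨x, hx.trans_eq (by simp only [Function.comp, id]; ring)⟩
  obtain ⟨x, hx⟩ := hclose.choice
  exact ⟨x, squeeze_zero_norm' hx (by simpa using tendsto_div_slopeBound.const_mul (C / steepCos))⟩

end

section

variable {a : ℂ} {f p : ℂ → ℂ}

theorem tendsto_im_div_ray (hf : IsCubicSol a 0 f) (hp : IsCubicSol a f p) (hfL : AxisL2 f)
    (hpL : AxisL2 p) (hne : f ≠ 0) (hfr : ∀ x : ℝ, (f x).im = 0) (hpr : ∀ x : ℝ, (p x).im = 0) :
    Tendsto (fun r : ℝ => (p (rayDir * r) / f (rayDir * r)).im) atTop (𝓝 0) := by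
  obtain ⟨x, hx⟩ := exists_tendsto_ray_sub (G := fun z => p z / f z)
    (G' := fun z => steepDir * wronskian f p z / f z ^ 2) (C := 1) <| by
      filter_upwards [eventually_norm_wronskian_le hf hp hfL hpL, eventually_ne_zero hf hfL hne]
        with r hω hr0 z hz hrz
      have hz0 := hr0 z hz hrz
      constructor
      · refine ((hasDerivAt_line hp.differentiable z steepDir 0).div
          (hasDerivAt_line hf.differentiable z steepDir 0) (by simpa using hz0)).congr_deriv ?_
        simp only [ofReal_zero, zero_mul, add_zero, wronskian]
        ring
      · have hpos : 0 < ‖f z‖ ^ 2 := by positivity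
        rw [norm_div, norm_mul, norm_steepDir, one_mul, norm_pow, ← mul_div_assoc,
          div_le_one hpos]
        exact hω z hz hrz
  have him := (continuous_im.tendsto _).comp hx.neg
  refine (by simpa using him : Tendsto _ _ _).congr fun r => ?_
  have hreal : (p (x r) / f (x r)).im = 0 := by simp [div_im, hfr, hpr]
  simp [hreal]

theorem hasDerivAt_log_norm_steepDir {z : ℂ} (hf : Differentiable ℂ f) (hz : f z ≠ 0) :
    HasDerivAt (fun s : ℝ => Real.log ‖f (z + s * steepDir)‖)
      (steepDir * (wkbDefect f z / f z) + steepDir * wkbSlope z).re 0 := by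
  refine (hasDerivAt_log_norm (hasDerivAt_line hf z steepDir 0) (by simpa using hz)).congr_deriv ?_
  rw [wkbDefect]
  field_simp
  simp

theorem tendsto_log_norm_ray_sub_reflect (hf : IsCubicSol a 0 f) (hL : AxisL2 f) (hne : f ≠ 0) :
    Tendsto (fun r : ℝ => Real.log ‖reflect f (rayDir * r)‖ - Real.log ‖f (rayDir * r)‖)
      atTop (𝓝 0) := by
  have hF := hf.reflect_homogeneous
  obtain ⟨x, hx⟩ := exists_tendsto_ray_sub
    (G := fun z => Real.log ‖f z‖ - Real.log ‖reflect f z‖)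
    (G' := fun z => (steepDir * (wkbDefect f z / f z) -
      steepDir * (wkbDefect (reflect f) z / reflect f z)).re) (C := 2 * (‖a‖ + 5)) <| by
      filter_upwards [eventually_norm_wkbDefect_le hf hL, eventually_ne_zero hf hL hne,
        eventually_norm_wkbDefect_le hF hL.reflect,
        eventually_ne_zero hF hL.reflect (reflect_ne_zero hne),
        tendsto_slopeBound.eventually_gt_atTop 0] with r hd hr0 hD hR0 hpos z hz hrz
      have hz0 := hr0 z hz hrz
      have hZ0 := hR0 z hz hrz
      refine ⟨((hasDerivAt_log_norm_steepDir hf.differentiable hz0).sub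
        (hasDerivAt_log_norm_steepDir hF.differentiable hZ0)).congr_deriv
          (by simp only [add_re, sub_re]; ring), ?_⟩
      have h₁ : slopeBound r * ‖wkbDefect f z / f z‖ ≤ ‖a‖ + 5 := by
        rw [norm_div, ← mul_div_assoc, div_le_iff₀ (by positivity)]
        exact hd z hz hrz
      have h₂ : slopeBound r * ‖wkbDefect (reflect f) z / reflect f z‖ ≤ ‖a‖ + 5 := by
        rw [norm_div, ← mul_div_assoc, div_le_iff₀ (by positivity), ← Complex.norm_conj a]
        exact hD z hz hrz
      have h := (abs_re_le_norm _).trans (norm_sub_le (steepDir * (wkbDefect f z / f z))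
        (steepDir * (wkbDefect (reflect f) z / reflect f z)))
      rw [norm_mul, norm_mul, norm_steepDir, one_mul, one_mul] at h
      rw [Real.norm_eq_abs]
      nlinarith
  refine hx.congr fun r => ?_
  have hreal : ‖reflect f (x r)‖ = ‖f (x r)‖ := by rw [reflect_ofReal, Complex.norm_conj]
  rw [hreal]
  ring

end

/-- The decay condition, along the positive real axis, that singles out the subdominant solutions
of `u'' = (z³ - μ) u`. -/
def IsRecessive (u : ℂ → ℂ) : Prop :=
  ∀ᶠ r : ℝ in atTop, ‖deriv u r + (r ^ (3 / 2 : ℝ) : ℝ) * u r‖ ≤ ‖u r‖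

/-- The flux in the direction `-i μ̄`, in which the term `μ u` of `u'' = (z³ - μ) u` does not
contribute to the derivative of the flux. -/
noncomputable def parameterFlux (μ : ℂ) (u : ℂ → ℂ) : ℝ → ℝ :=
  flux (-(I * conj μ)) (fun r : ℝ => u r) (fun r : ℝ => deriv u r)

section

variable {a μ : ℂ} {r : ℝ} {f g u : ℂ → ℂ}

theorem IsRecessive.of_axisL2 (hf : IsCubicSol a 0 f) (hL : AxisL2 f) :
    IsRecessive fun z => f (rayDir * z) := by
  filter_upwards [eventually_norm_wkbDefect_le hf hL, eventually_ge_atTop 1,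
    tendsto_slopeBound.eventually_ge_atTop (4 * (‖a‖ + 5))] with r hd hr1 hslope
  have hr0 : 0 ≤ r := by linarith
  have hdef := hd _ (ofReal_mul_rayDir_mem_quadrant hr0) (norm_rayDir_mul hr0).ge
  have hsplit : deriv (fun z => f (rayDir * z)) r + (r ^ (3 / 2 : ℝ) : ℝ) * f (rayDir * r) =
      -((3 / (4 * r) : ℝ) * f (rayDir * r)) + rayDir * wkbDefect f (rayDir * r) := by
    have hP := rayDir_mul_wkbSlope (r := r) (by linarith)
    rw [deriv_comp_mul_left, smul_eq_mul, wkbDefect, mul_sub, ← mul_assoc rayDir (wkbSlope _), hP]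
    push_cast
    ring
  have hsmall : 3 / (4 * r) ≤ 3 / 4 := by
    rw [div_le_div_iff₀ (by positivity) (by norm_num)]; linarith
  have hquarter : ‖wkbDefect f (rayDir * r)‖ ≤ 1 / 4 * ‖f (rayDir * r)‖ := by
    have ha5 : 0 < ‖a‖ + 5 := by positivity
    have := mul_le_mul_of_nonneg_right hslope (norm_nonneg (wkbDefect f (rayDir * r)))
    nlinarith
  calc ‖deriv (fun z => f (rayDir * z)) r + (r ^ (3 / 2 : ℝ) : ℝ) * f (rayDir * r)‖
      ≤ 3 / (4 * r) * ‖f (rayDir * r)‖ + ‖wkbDefect f (rayDir * r)‖ := by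
        rw [hsplit]
        refine (norm_add_le _ _).trans_eq ?_
        rw [norm_neg, norm_mul, norm_mul, norm_rayDir, one_mul, norm_real,
          Real.norm_of_nonneg (by positivity)]
    _ ≤ 3 / 4 * ‖f (rayDir * r)‖ + 1 / 4 * ‖f (rayDir * r)‖ := by gcongr
    _ = ‖f (rayDir * r)‖ := by ring

theorem hasDerivAt_ofReal (hu : Differentiable ℂ u) (r : ℝ) :
    HasDerivAt (fun r : ℝ => u r) (deriv u r) r :=
  (hu r).hasDerivAt.comp_ofReal

theorem IsCubicSol.hasDerivAt_ofReal_deriv (hu : IsCubicSol a g u) (r : ℝ) :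
    HasDerivAt (fun r : ℝ => deriv u r) ((r ^ 3 + a) * u r + g r) r :=
  hu.deriv_deriv r ▸ hasDerivAt_ofReal hu.differentiable.deriv r

theorem IsRecessive.re_mul_le (h : ‖deriv u r + (r ^ (3 / 2 : ℝ) : ℝ) * u r‖ ≤ ‖u r‖) (ζ : ℂ) :
    (ζ * (conj (u r) * deriv u r)).re ≤ (‖ζ‖ - ζ.re * r ^ (3 / 2 : ℝ)) * ‖u r‖ ^ 2 := by
  have hsplit : ζ * (conj (u r) * deriv u r) =
      ζ * (conj (u r) * (deriv u r + (r ^ (3 / 2 : ℝ) : ℝ) * u r)) -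
        ζ * (r ^ (3 / 2 : ℝ) * ‖u r‖ ^ 2 : ℝ) := by
    push_cast
    rw [← conj_mul']
    ring
  have herr : (ζ * (conj (u r) * (deriv u r + (r ^ (3 / 2 : ℝ) : ℝ) * u r))).re ≤
      ‖ζ‖ * ‖u r‖ ^ 2 := by
    refine (re_le_norm _).trans ?_
    rw [norm_mul, norm_mul, Complex.norm_conj, sq]
    gcongr
  rw [hsplit, sub_re, re_mul_ofReal]
  linarith

theorem IsRecessive.tendsto_zero (hu : Differentiable ℂ u) (hrec : IsRecessive u) :
    Tendsto (fun r : ℝ => u r) atTop (𝓝 0) ∧ Tendsto (fun r : ℝ => deriv u r) atTop (𝓝 0) := by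
  refine tendsto_zero_of_flux_le (hasDerivAt_ofReal hu) ?_ ?_
  · filter_upwards [hrec, (tendsto_rpow_atTop (y := 3 / 2) (by norm_num)).eventually_ge_atTop 2]
      with r hr hr2
    have := re_mul_le hr 1
    simp only [one_mul, norm_one, one_re] at this
    nlinarith [sq_nonneg ‖u r‖]
  · filter_upwards [hrec, eventually_ge_atTop 1] with r hr hr1
    have hpow : r ^ (3 / 2 : ℝ) ≤ r ^ 2 := by
      rw [← Real.rpow_two]; exact Real.rpow_le_rpow_of_exponent_le hr1 (by norm_num)
    have hsq : 1 ≤ r ^ 2 := one_le_pow₀ hr1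
    have htri := norm_sub_le (deriv u r + (r ^ (3 / 2 : ℝ) : ℝ) * u r) ((r ^ (3 / 2 : ℝ) : ℝ) * u r)
    rw [add_sub_cancel_right, norm_mul, norm_real, Real.norm_of_nonneg (by positivity)] at htri
    nlinarith [norm_nonneg (u r)]

theorem hasDerivAt_flux_ofReal (hu : IsCubicSol a 0 u) (ζ : ℂ) (r : ℝ) :
    HasDerivAt (flux ζ (fun r : ℝ => u r) (fun r : ℝ => deriv u r))
      (ζ.re * (‖deriv u r‖ ^ 2 + r ^ 3 * ‖u r‖ ^ 2) + (ζ * a).re * ‖u r‖ ^ 2) r := by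
  have hu' := hu.hasDerivAt_ofReal_deriv r
  simp only [Pi.zero_apply, add_zero] at hu'
  refine (hasDerivAt_flux (hasDerivAt_ofReal hu.differentiable r) hu').congr_deriv ?_
  rw [mul_add, add_re, ← ofReal_pow, re_mul_ofReal]
  ring

theorem monotoneOn_flux {ζ : ℂ} (hζ : 0 ≤ ζ.re) (hζa : 0 ≤ (ζ * a).re)
    (hu : IsCubicSol a 0 u) :
    MonotoneOn (flux ζ (fun r : ℝ => u r) (fun r : ℝ => deriv u r)) (Ici 0) := by
  refine monotoneOn_of_deriv_nonneg (convex_Ici 0)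
    (fun r _ => (hasDerivAt_flux_ofReal hu ζ r).continuousAt.continuousWithinAt)
    (fun r _ => (hasDerivAt_flux_ofReal hu ζ r).differentiableAt.differentiableWithinAt)
    fun r hr => ?_
  rw [interior_Ici, mem_Ioi] at hr
  rw [(hasDerivAt_flux_ofReal hu ζ r).deriv]
  positivity

theorem strictMonoOn_flux {ζ : ℂ} (hζ : 0 < ζ.re) (hζa : 0 ≤ (ζ * a).re)
    (hu : IsCubicSol a 0 u) (hne : u ≠ 0) :
    StrictMonoOn (flux ζ (fun r : ℝ => u r) (fun r : ℝ => deriv u r)) (Ici 0) := by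
  refine strictMonoOn_of_deriv_pos (convex_Ici 0)
    (fun r _ => (hasDerivAt_flux_ofReal hu ζ r).continuousAt.continuousWithinAt) fun r hr => ?_
  rw [interior_Ici, mem_Ioi] at hr
  rw [(hasDerivAt_flux_ofReal hu ζ r).deriv]
  refine add_pos_of_pos_of_nonneg (mul_pos hζ ?_) (by positivity)
  by_cases h0 : u r = 0
  · have : deriv u r ≠ 0 := fun h1 => hne (hu.eq_zero_of_deriv_eq_zero h0 h1)
    positivity
  · positivity

theorem IsRecessive.tendsto_flux (hu : Differentiable ℂ u) (hrec : IsRecessive u) (ζ : ℂ) :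
    Tendsto (flux ζ (fun r : ℝ => u r) (fun r : ℝ => deriv u r)) atTop (𝓝 0) := by
  obtain ⟨h0, h1⟩ := hrec.tendsto_zero hu
  refine squeeze_zero_norm (fun r => abs_flux_le _ _ _ r) ?_
  simpa using (h0.norm.mul h1.norm).const_mul ‖ζ‖

theorem nonpos_of_monotoneOn_of_tendsto_zero {h : ℝ → ℝ} (hmono : MonotoneOn h (Ici 0))
    (hlim : Tendsto h atTop (𝓝 0)) (hr : 0 ≤ r) : h r ≤ 0 := by
  refine ge_of_tendsto hlim ?_
  filter_upwards [eventually_ge_atTop r] with s hs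
  exact hmono hr (hr.trans hs) hs

theorem neg_of_strictMonoOn_of_tendsto_zero {h : ℝ → ℝ} (hmono : StrictMonoOn h (Ici 0))
    (hlim : Tendsto h atTop (𝓝 0)) (hr : 0 ≤ r) : h r < 0 := by
  have hr1 : (0 : ℝ) ≤ r + 1 := by linarith
  exact (hmono hr hr1 (lt_add_one r)).trans_le
    (nonpos_of_monotoneOn_of_tendsto_zero hmono.monotoneOn hlim hr1)

theorem neg_I_mul_conj_re (μ : ℂ) : (-(I * conj μ)).re = -μ.im := by
  rw [neg_re, I_mul_re, conj_im, neg_neg]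

theorem neg_I_mul_conj_mul_neg_re (μ : ℂ) : (-(I * conj μ) * -μ).re = 0 := by
  rw [neg_mul_neg, mul_assoc, I_mul_re, ← normSq_eq_conj_mul_self, ofReal_im, neg_zero]

theorem hasDerivAt_parameterFlux (hu : IsCubicSol (-μ) 0 u) (r : ℝ) :
    HasDerivAt (parameterFlux μ u) (-μ.im * (‖deriv u r‖ ^ 2 + r ^ 3 * ‖u r‖ ^ 2)) r := by
  refine (hasDerivAt_flux_ofReal hu _ r).congr_deriv ?_
  rw [neg_I_mul_conj_re, neg_I_mul_conj_mul_neg_re, zero_mul, add_zero]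

theorem strictMonoOn_parameterFlux (hμ : μ.im < 0) (hu : IsCubicSol (-μ) 0 u) (hne : u ≠ 0) :
    StrictMonoOn (parameterFlux μ u) (Ici 0) :=
  strictMonoOn_flux (by rwa [neg_I_mul_conj_re, neg_pos]) (neg_I_mul_conj_mul_neg_re μ).ge hu hne

theorem IsRecessive.parameterFlux_neg (hrec : IsRecessive u) (hμ : μ.im < 0)
    (hu : IsCubicSol (-μ) 0 u) (hne : u ≠ 0) (hr : 0 ≤ r) : parameterFlux μ u r < 0 :=
  neg_of_strictMonoOn_of_tendsto_zero (strictMonoOn_parameterFlux hμ hu hne)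
    (hrec.tendsto_flux hu.differentiable _) hr

theorem ne_zero_of_parameterFlux_ne_zero (h : parameterFlux μ u r ≠ 0) : u r ≠ 0 :=
  fun h0 => h (by simp [parameterFlux, flux, h0])

theorem IsRecessive.parameterFlux_le (h : ‖deriv u r + (r ^ (3 / 2 : ℝ) : ℝ) * u r‖ ≤ ‖u r‖)
    (μ : ℂ) : parameterFlux μ u r ≤ (‖μ‖ + μ.im * r ^ (3 / 2 : ℝ)) * ‖u r‖ ^ 2 := by
  have := re_mul_le h (-(I * conj μ))
  simp only [norm_neg, norm_mul, norm_I, Complex.norm_conj] at this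
  simpa [parameterFlux, flux] using this

end

/-! ### The shooting function -/

theorem exists_isCubicSol (a z₀ c₀ c₁ : ℂ) :
    ∃ f, IsCubicSol a 0 f ∧ f z₀ = c₀ ∧ deriv f z₀ = c₁ := by
  obtain ⟨h, hh, h₀, h₁, h₂⟩ := exists_entire_solution (q := fun z => (z + z₀) ^ 3 + a) (g := 0)
    (by fun_prop) (differentiable_const 0) c₀ c₁
  have hderiv : ∀ v : ℂ → ℂ, deriv (fun z => v (z - z₀)) = fun z => deriv v (z - z₀) := fun v =>
    funext fun z => deriv_comp_sub_const v z₀ z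
  refine ⟨fun z => h (z - z₀), ⟨hh.comp (differentiable_id.sub_const z₀), fun z => ?_⟩, ?_, ?_⟩
  · simp [hderiv, h₂]
  · simpa using h₀
  · simpa [hderiv] using h₁

/-- The solution `S` of `u'' = (z³ - μ) u` with `S(0) = 0` and `S'(0) = 1`. -/
noncomputable def dirichletSol (μ : ℂ) : ℂ → ℂ :=
  (exists_isCubicSol (-μ) 0 0 1).choose

/-- The boundary form `S'(R) + R^{3/2} S(R)` of the Dirichlet solution. Its zeros `μ` are the
eigenvalues of `-u'' + r³ u` on `[0, R]` with `u(0) = 0` and `u'(R) = -R^{3/2} u(R)`. -/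
noncomputable def shooting (R : ℝ) (μ : ℂ) : ℂ :=
  deriv (dirichletSol μ) R + (R ^ (3 / 2 : ℝ) : ℝ) * dirichletSol μ R

section

variable {a μ : ℂ} {r : ℝ} {f p u : ℂ → ℂ}

theorem isCubicSol_dirichletSol (μ : ℂ) : IsCubicSol (-μ) 0 (dirichletSol μ) :=
  (exists_isCubicSol (-μ) 0 0 1).choose_spec.1

theorem dirichletSol_zero (μ : ℂ) : dirichletSol μ 0 = 0 :=
  (exists_isCubicSol (-μ) 0 0 1).choose_spec.2.1

theorem deriv_dirichletSol_zero (μ : ℂ) : deriv (dirichletSol μ) 0 = 1 :=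
  (exists_isCubicSol (-μ) 0 0 1).choose_spec.2.2

theorem dirichletSol_ne_zero (μ : ℂ) : dirichletSol μ ≠ 0 := fun h => by
  simpa [h] using deriv_dirichletSol_zero μ

theorem IsCubicSol.wronskian_eq (hf : IsCubicSol a 0 f) (hp : IsCubicSol a 0 p) (z w : ℂ) :
    wronskian f p z = wronskian f p w :=
  is_const_of_deriv_eq_zero (differentiable_wronskian hf hp)
    (fun z => by simpa using (hasDerivAt_wronskian hf hp z).deriv) z w

theorem wronskian_dirichletSol (hu : IsCubicSol (-μ) 0 u) (z : ℂ) :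
    wronskian (dirichletSol μ) u z = -u 0 := by
  rw [(isCubicSol_dirichletSol μ).wronskian_eq hu z 0]
  simp [wronskian, dirichletSol_zero, deriv_dirichletSol_zero]

theorem parameterFlux_dirichletSol_pos (hμ : μ.im < 0) (hr : 0 < r) :
    0 < parameterFlux μ (dirichletSol μ) r := by
  have h0 : parameterFlux μ (dirichletSol μ) 0 = 0 := by
    simp [parameterFlux, flux, dirichletSol_zero]
  exact h0 ▸ strictMonoOn_parameterFlux hμ (isCubicSol_dirichletSol μ)
    (dirichletSol_ne_zero μ) self_mem_Ici hr.le hr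

/-- Multiplying by the Wronskian turns the difference of the two fluxes into a phase of `S u`. -/
theorem norm_sq_mul_parameterFlux_sub (hu : IsCubicSol (-μ) 0 u) (r : ℝ) :
    ‖dirichletSol μ r‖ ^ 2 * parameterFlux μ u r -
      ‖u r‖ ^ 2 * parameterFlux μ (dirichletSol μ) r =
        (μ * (dirichletSol μ r * u r) * conj (u 0)).im := by
  have hw := wronskian_dirichletSol hu r
  rw [wronskian] at hw
  set S := dirichletSol μ
  have hkey : ((‖S r‖ ^ 2 : ℝ) : ℂ) * (-(I * conj μ) * (conj (u r) * deriv u r)) -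
      ((‖u r‖ ^ 2 : ℝ) : ℂ) * (-(I * conj μ) * (conj (S r) * deriv S r)) =
        I * conj (μ * (S r * u r)) * u 0 := by
    push_cast
    rw [← conj_mul', ← conj_mul', map_mul, map_mul]
    linear_combination -(I * conj μ * conj (S r) * conj (u r)) * hw
  have hre := congrArg re hkey
  rw [sub_re, re_ofReal_mul, re_ofReal_mul] at hre
  rw [parameterFlux, parameterFlux, flux, flux, hre, mul_assoc I, I_mul_re, ← conj_im, map_mul,
    conj_conj]

theorem neg_norm_sq_mul_parameterFlux_le (hμ : μ.im < 0) (hu : IsCubicSol (-μ) 0 u)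
    (hr : 0 ≤ r) : ‖dirichletSol μ r‖ ^ 2 * -parameterFlux μ u r ≤
      -(μ * (dirichletSol μ r * u r) * conj (u 0)).im := by
  rcases hr.eq_or_lt with rfl | hr
  · simp [dirichletSol_zero]
  · have := mul_nonneg (sq_nonneg ‖u r‖) (parameterFlux_dirichletSol_pos hμ hr).le
    linarith [norm_sq_mul_parameterFlux_sub hu r]

theorem IsRecessive.tendsto_dirichletSol_mul (hrec : IsRecessive u) (hμ : μ.im < 0)
    (hu : IsCubicSol (-μ) 0 u) :
    Tendsto (fun r : ℝ => dirichletSol μ r * u r) atTop (𝓝 0) := by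
  have hgrow : Tendsto (fun r : ℝ => -μ.im * r ^ (3 / 2 : ℝ) + -‖μ‖) atTop atTop :=
    tendsto_atTop_add_const_right _ _
      ((tendsto_rpow_atTop (by norm_num)).const_mul_atTop (neg_pos.mpr hμ))
  refine squeeze_zero_norm' ?_ ((tendsto_const_nhds (x := ‖μ‖ * ‖u 0‖)).div_atTop hgrow)
  filter_upwards [hrec, hgrow.eventually_gt_atTop 0, eventually_ge_atTop 0] with r hr hpos hr0
  rw [le_div_iff₀ hpos]
  have hflux := parameterFlux_le hr μ
  have hlow := neg_norm_sq_mul_parameterFlux_le hμ hu hr0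
  have hup : -(μ * (dirichletSol μ r * u r) * conj (u 0)).im ≤
      ‖μ‖ * ‖u 0‖ * ‖dirichletSol μ r * u r‖ := by
    refine (neg_le_abs _).trans ((abs_im_le_norm _).trans_eq ?_)
    rw [norm_mul, norm_mul μ, Complex.norm_conj]
    ring
  rcases (norm_nonneg (dirichletSol μ r * u r)).eq_or_lt with h0 | h0
  · rw [← h0, zero_mul]
    positivity
  · refine le_of_mul_le_mul_right ?_ h0
    refine le_trans (le_trans ?_ hlow) hup
    rw [norm_mul]
    nlinarith [mul_le_mul_of_nonneg_left hflux (sq_nonneg ‖dirichletSol μ r‖)]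

theorem shooting_mul (hu : IsCubicSol (-μ) 0 u) (R : ℝ) :
    shooting R μ * u R =
      u 0 + dirichletSol μ R * (deriv u R + (R ^ (3 / 2 : ℝ) : ℝ) * u R) := by
  have hw := wronskian_dirichletSol hu R
  rw [wronskian] at hw
  rw [shooting]
  linear_combination -hw

theorem IsRecessive.neg_im_mul_dirichletSol_mul_pos (hrec : IsRecessive u) (hμ : μ.im < 0)
    (hu : IsCubicSol (-μ) 0 u) (hne : u ≠ 0) (hr : 0 < r) :
    0 < -(μ * (dirichletSol μ r * u r) * conj (u 0)).im :=
  (mul_pos (sq_pos_of_pos (norm_pos_iff.mpr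
    (ne_zero_of_parameterFlux_ne_zero (parameterFlux_dirichletSol_pos hμ hr).ne')))
    (neg_pos.mpr (hrec.parameterFlux_neg hμ hu hne hr.le))).trans_le
    (neg_norm_sq_mul_parameterFlux_le hμ hu hr.le)

theorem IsRecessive.tendsto_shooting_mul (hrec : IsRecessive u) (hμ : μ.im < 0)
    (hu : IsCubicSol (-μ) 0 u) :
    Tendsto (fun R : ℝ => shooting R μ * u R) atTop (𝓝 (u 0)) := by
  simp only [shooting_mul hu]
  have hsmall : Tendsto (fun R : ℝ => dirichletSol μ R *
      (deriv u R + (R ^ (3 / 2 : ℝ) : ℝ) * u R)) atTop (𝓝 0) := by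
    refine squeeze_zero_norm' ?_
      (tendsto_zero_iff_norm_tendsto_zero.mp (hrec.tendsto_dirichletSol_mul hμ hu))
    filter_upwards [hrec] with R hR
    rw [norm_mul, norm_mul]
    gcongr
  simpa using hsmall.const_add (u 0)

theorem IsRecessive.apply_zero_ne_zero (hrec : IsRecessive u) (hμ : μ.im < 0)
    (hu : IsCubicSol (-μ) 0 u) (hne : u ≠ 0) : u 0 ≠ 0 := by
  simpa using ne_zero_of_parameterFlux_ne_zero (hrec.parameterFlux_neg hμ hu hne le_rfl).ne

theorem IsRecessive.tendsto_log_norm_shooting (hrec : IsRecessive u) (hμ : μ.im < 0)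
    (hu : IsCubicSol (-μ) 0 u) (hne : u ≠ 0) :
    Tendsto (fun R : ℝ => Real.log ‖shooting R μ‖ + Real.log ‖u R‖) atTop
      (𝓝 (Real.log ‖u 0‖)) := by
  have h0 := hrec.apply_zero_ne_zero hμ hu hne
  have hlim := hrec.tendsto_shooting_mul hμ hu
  refine (hlim.norm.log (norm_ne_zero_iff.mpr h0)).congr' ?_
  filter_upwards [hlim.eventually_ne h0] with R hR
  rw [mul_ne_zero_iff] at hR
  rw [norm_mul, Real.log_mul (norm_ne_zero_iff.mpr hR.1) (norm_ne_zero_iff.mpr hR.2)]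

end

section

variable {μ : ℂ} {Λ r R ρ σ : ℝ} {u : ℂ → ℂ}

theorem norm_pow_three_sub_le (hμ : ‖μ‖ ≤ ρ) (hr : r ∈ Icc 0 R) :
    ‖(r : ℂ) ^ 3 + -μ‖ ≤ R ^ 3 + ρ := by
  refine (norm_add_le _ _).trans ?_
  rw [norm_neg, norm_pow, norm_real, Real.norm_of_nonneg hr.1]
  gcongr
  exacts [hr.1, hr.2]

theorem exists_norm_dirichletSol_le (ρ R : ℝ) :
    ∃ Λ, 1 ≤ Λ ∧ ∀ μ, ‖μ‖ ≤ ρ → ∀ r ∈ Icc 0 R,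
      ‖dirichletSol μ r‖ ≤ Λ ∧ ‖deriv (dirichletSol μ) r‖ ≤ Λ := by
  set K := max (R ^ 3 + ρ) 1
  refine ⟨max (gronwallBound 1 K 0 R) 1, le_max_right _ _, fun μ hμ r hr => ?_⟩
  have hS := isCubicSol_dirichletSol μ
  have hK : 0 ≤ K := zero_le_one.trans (le_max_right _ _)
  have hbound := norm_le_gronwallBound_of_linear (δ := 1) (hasDerivAt_ofReal hS.differentiable)
    hS.hasDerivAt_ofReal_deriv (le_max_right _ _)
    (fun r hr => (norm_pow_three_sub_le hμ hr).trans (le_max_left _ _))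
    (fun _ _ => norm_zero.le) (by simp [dirichletSol_zero]) (by simp [deriv_dirichletSol_zero]) hr
  have hmono : gronwallBound 1 K 0 r ≤ max (gronwallBound 1 K 0 R) 1 :=
    (gronwallBound_mono zero_le_one le_rfl hK hr.2).trans (le_max_left _ _)
  exact ⟨hbound.1.trans hmono, hbound.2.trans hmono⟩

theorem exists_norm_dirichletSol_sub_le (μ : ℂ) (R : ℝ) :
    ∃ C, ∀ ν, ‖ν - μ‖ ≤ 1 → ∀ r ∈ Icc 0 R,
      ‖dirichletSol ν r - dirichletSol μ r‖ ≤ C * ‖ν - μ‖ := by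
  obtain ⟨Λ, hΛ, hΛS⟩ := exists_norm_dirichletSol_le ‖μ‖ R
  set K := max (R ^ 3 + (‖μ‖ + 1)) 1
  have hK : 1 ≤ K := le_max_right _ _
  refine ⟨Λ / K * (Real.exp (K * R) - 1), fun ν hν r hr => ?_⟩
  have hS := isCubicSol_dirichletSol μ
  have hT := isCubicSol_dirichletSol ν
  have hνK : ‖ν‖ ≤ ‖μ‖ + 1 := by linarith [norm_le_norm_add_norm_sub' ν μ]
  have hbound := (norm_le_gronwallBound_of_linear (δ := 0) (K := K) (ε := Λ * ‖ν - μ‖)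
    (Q := fun r : ℝ => (r : ℂ) ^ 3 + -ν) (e := fun r : ℝ => (μ - ν) * dirichletSol μ r)
    (fun r => (hasDerivAt_ofReal hT.differentiable r).sub (hasDerivAt_ofReal hS.differentiable r))
    (fun r => ((hT.hasDerivAt_ofReal_deriv r).sub (hS.hasDerivAt_ofReal_deriv r)).congr_deriv
      (by simp only [Pi.zero_apply, Pi.sub_apply]; ring)) hK
    (fun r hr => (norm_pow_three_sub_le hνK hr).trans (le_max_left _ _))
    (fun r hr => ?_) (by simp [dirichletSol_zero]) (by simp [deriv_dirichletSol_zero]) hr).1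
  · refine hbound.trans ?_
    rw [gronwallBound_of_K_ne_0 (by positivity)]
    beta_reduce
    rw [zero_mul, zero_add, mul_div_right_comm, mul_right_comm]
    gcongr
    exact hr.2
  · rw [norm_mul, norm_sub_rev, mul_comm]
    gcongr
    exact (hΛS μ le_rfl r hr).1

theorem shooting_sub (hu : IsCubicSol (-μ) 0 u) (huR : u R = 1)
    (huR' : deriv u R = -(R ^ (3 / 2 : ℝ) : ℝ)) (ν : ℂ) :
    shooting R ν - shooting R μ = (μ - ν) * ∫ r in (0 : ℝ)..R, dirichletSol ν r * u r := by
  have hS : IsCubicSol (-μ) ((μ - ν) • dirichletSol ν) (dirichletSol ν) :=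
    ⟨(isCubicSol_dirichletSol ν).differentiable, fun z => by
      rw [(isCubicSol_dirichletSol ν).deriv_deriv_homogeneous]
      simp only [Pi.smul_apply, smul_eq_mul]
      ring⟩
  have hcont := (isCubicSol_dirichletSol ν).differentiable.continuous
  have hucont := hu.differentiable.continuous
  have hftc := intervalIntegral.integral_eq_sub_of_hasDerivAt (a := 0) (b := R)
    (f := fun r : ℝ => wronskian u (dirichletSol ν) r)
    (fun r _ => (hasDerivAt_wronskian hu hS r).comp_ofReal)
    (Continuous.intervalIntegrable (by simp only [Pi.smul_apply]; fun_prop) 0 R)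
  have hshoot := shooting_mul hu R
  rw [huR, huR'] at hshoot
  rw [← intervalIntegral.integral_const_mul]
  convert hftc.symm using 1
  · simp only [wronskian, huR, huR', ofReal_zero, dirichletSol_zero, deriv_dirichletSol_zero]
    rw [shooting]
    linear_combination -hshoot
  · congr 1
    funext r
    simp only [Pi.smul_apply, smul_eq_mul]
    ring

theorem tendsto_integral_dirichletSol_mul (hu : Continuous u) (μ : ℂ) (hR : 0 ≤ R) :
    Tendsto (fun ν => ∫ r in (0 : ℝ)..R, dirichletSol ν r * u r) (𝓝 μ)
      (𝓝 (∫ r in (0 : ℝ)..R, dirichletSol μ r * u r)) := by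
  have hcont : ∀ ν, Continuous fun r : ℝ => dirichletSol ν r * u r := fun ν => by
    have := (isCubicSol_dirichletSol ν).differentiable.continuous
    fun_prop
  obtain ⟨C, hC⟩ := exists_norm_dirichletSol_sub_le μ R
  obtain ⟨M, hM⟩ := isCompact_Icc.exists_bound_of_continuousOn (s := Icc 0 R)
    (hu.comp continuous_ofReal).continuousOn
  rw [tendsto_iff_norm_sub_tendsto_zero]
  have hlim : Tendsto (fun ν : ℂ => C * ‖ν - μ‖ * M * |R - 0|) (𝓝 μ) (𝓝 0) := by
    have : Continuous fun ν : ℂ => C * ‖ν - μ‖ * M * |R - 0| := by fun_prop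
    simpa using this.tendsto μ
  refine squeeze_zero' (.of_forall fun _ => norm_nonneg _) ?_ hlim
  filter_upwards [Metric.closedBall_mem_nhds μ one_pos] with ν hν
  rw [mem_closedBall_iff_norm] at hν
  rw [← intervalIntegral.integral_sub ((hcont ν).intervalIntegrable 0 R)
    ((hcont μ).intervalIntegrable 0 R)]
  refine intervalIntegral.norm_integral_le_of_norm_le_const fun r hr => ?_
  rw [uIoc_of_le hR] at hr
  have hr' := Ioc_subset_Icc_self hr
  rw [← sub_mul, norm_mul]
  exact mul_le_mul (hC ν hν r hr') (hM r hr') (norm_nonneg _)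
    ((norm_nonneg _).trans (hC ν hν r hr'))

theorem hasDerivAt_shooting (hu : IsCubicSol (-μ) 0 u) (hR : 0 ≤ R) (huR : u R = 1)
    (huR' : deriv u R = -(R ^ (3 / 2 : ℝ) : ℝ)) :
    HasDerivAt (shooting R) (-∫ r in (0 : ℝ)..R, dirichletSol μ r * u r) μ := by
  rw [hasDerivAt_iff_tendsto_slope]
  refine (((tendsto_integral_dirichletSol_mul hu.differentiable.continuous μ hR).mono_left
    nhdsWithin_le_nhds).neg).congr' ?_
  filter_upwards [self_mem_nhdsWithin] with ν hν
  have hνμ : ν - μ ≠ 0 := sub_ne_zero.mpr hν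
  rw [slope_def_field, shooting_sub hu huR huR' ν, eq_div_iff hνμ]
  ring

/-- The choice of `s` keeps `S'` within `1/2` of its initial value `1`. -/
theorem exists_half_le_norm_dirichletSol (ρ : ℝ) :
    ∃ s ∈ Ioc (0 : ℝ) 1, ∀ μ, ‖μ‖ ≤ ρ → ∀ r ∈ Icc 0 s, r / 2 ≤ ‖dirichletSol μ r‖ := by
  obtain ⟨Λ, hΛ, hΛS⟩ := exists_norm_dirichletSol_le ρ 1
  set K := max (1 ^ 3 + ρ) 1
  have hK : 1 ≤ K := le_max_right _ _
  have hKΛ : 1 ≤ K * Λ := one_le_mul_of_one_le_of_one_le hK hΛ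
  have hs1 : 1 / (2 * (K * Λ)) ≤ 1 := by rw [div_le_one (by positivity)]; linarith
  refine ⟨1 / (2 * (K * Λ)), ⟨by positivity, hs1⟩, fun μ hμ r hr => ?_⟩
  have hS := isCubicSol_dirichletSol μ
  have hderiv : ∀ x ∈ Icc 0 r, ‖deriv (dirichletSol μ) x - 1‖ ≤ 1 / 2 := fun x hx => by
    have hmvt := norm_image_sub_le_of_norm_deriv_le_segment'
      (f := fun x : ℝ => deriv (dirichletSol μ) x) (C := K * Λ) (a := 0) (b := r)
      (fun x _ => (hS.hasDerivAt_ofReal_deriv x).hasDerivWithinAt) (fun x hx => ?_) x hx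
    · rw [ofReal_zero, deriv_dirichletSol_zero, sub_zero] at hmvt
      refine hmvt.trans ?_
      calc K * Λ * x ≤ K * Λ * (1 / (2 * (K * Λ))) := by gcongr; exact hx.2.trans hr.2
        _ = 1 / 2 := by field_simp
    · have hx1 : x ∈ Icc (0 : ℝ) 1 := ⟨hx.1, hx.2.le.trans (hr.2.trans hs1)⟩
      rw [Pi.zero_apply, add_zero, norm_mul]
      gcongr
      exacts [(norm_pow_three_sub_le hμ hx1).trans (le_max_left _ _), (hΛS μ hμ x hx1).1]
  have hmvt := norm_image_sub_le_of_norm_deriv_le_segment'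
    (f := fun x : ℝ => dirichletSol μ x - x) (a := 0) (b := r)
    (fun x _ => ((hasDerivAt_ofReal hS.differentiable x).sub
      (hasDerivAt_id x).ofReal_comp).hasDerivWithinAt)
    (fun x hx => hderiv x (Ico_subset_Icc_self hx)) r ⟨hr.1, le_rfl⟩
  simp only [dirichletSol_zero, ofReal_zero, sub_zero] at hmvt
  have := norm_sub_norm_le (r : ℂ) (r - dirichletSol μ r)
  rw [sub_sub_cancel, norm_sub_rev, norm_real, Real.norm_of_nonneg hr.1] at this
  linarith

theorem norm_sq_apply_zero_le (hu : IsCubicSol (-μ) 0 u) (h₀ : ‖dirichletSol μ r‖ ≤ Λ)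
    (h₁ : ‖deriv (dirichletSol μ) r‖ ≤ Λ) :
    ‖u 0‖ ^ 2 ≤ 2 * Λ ^ 2 * (‖deriv u r‖ ^ 2 + ‖u r‖ ^ 2) := by
  have hw := congrArg norm (wronskian_dirichletSol hu r)
  rw [norm_neg, wronskian] at hw
  have : 0 ≤ Λ := (norm_nonneg _).trans h₀
  calc ‖u 0‖ ^ 2 ≤ (Λ * ‖deriv u r‖ + Λ * ‖u r‖) ^ 2 := by
        rw [← hw]
        gcongr
        refine (norm_sub_le _ _).trans ?_
        rw [norm_mul, norm_mul]
        gcongr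
    _ ≤ 2 * ((Λ * ‖deriv u r‖) ^ 2 + (Λ * ‖u r‖) ^ 2) := add_sq_le
    _ = 2 * Λ ^ 2 * (‖deriv u r‖ ^ 2 + ‖u r‖ ^ 2) := by ring

theorem le_neg_parameterFlux_one (hu : IsCubicSol (-μ) 0 u) (hμ : μ.im ≤ -σ) (hσ : 0 ≤ σ)
    (hΛ : 0 < Λ) (hS : ∀ r ∈ Icc (0 : ℝ) 2, ‖dirichletSol μ r‖ ≤ Λ ∧
      ‖deriv (dirichletSol μ) r‖ ≤ Λ) (h2 : parameterFlux μ u 2 ≤ 0) :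
    σ / (2 * Λ ^ 2) * ‖u 0‖ ^ 2 ≤ -parameterFlux μ u 1 := by
  have hmvt := (convex_Icc (1 : ℝ) 2).mul_sub_le_image_sub_of_le_deriv
    (C := σ / (2 * Λ ^ 2) * ‖u 0‖ ^ 2) (f := parameterFlux μ u)
    (fun r _ => (hasDerivAt_parameterFlux hu r).continuousAt.continuousWithinAt)
    (fun r _ => (hasDerivAt_parameterFlux hu r).differentiableAt.differentiableWithinAt)
    (fun r hr => ?_) 1 (by simp) 2 (by simp) one_le_two
  · linarith
  · rw [interior_Icc] at hr
    have hS' := hS r ⟨by linarith [hr.1], hr.2.le⟩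
    have hu0 := norm_sq_apply_zero_le hu hS'.1 hS'.2
    have hr3 : 1 ≤ r ^ 3 := one_le_pow₀ hr.1.le
    rw [(hasDerivAt_parameterFlux hu r).deriv]
    calc σ / (2 * Λ ^ 2) * ‖u 0‖ ^ 2
        ≤ σ / (2 * Λ ^ 2) * (2 * Λ ^ 2 * (‖deriv u r‖ ^ 2 + 1 * ‖u r‖ ^ 2)) := by
          rw [one_mul]; gcongr
      _ = σ * (‖deriv u r‖ ^ 2 + 1 * ‖u r‖ ^ 2) := by field_simp
      _ ≤ -μ.im * (‖deriv u r‖ ^ 2 + r ^ 3 * ‖u r‖ ^ 2) := by gcongr <;> linarith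

end

section

variable {μ : ℂ} {r s c R ρ σ : ℝ} {u : ℂ → ℂ}

theorem parameterFlux_of_robin (huR : u R = 1) (huR' : deriv u R = -(R ^ (3 / 2 : ℝ) : ℝ))
    (μ : ℂ) : parameterFlux μ u R = μ.im * R ^ (3 / 2 : ℝ) := by
  rw [parameterFlux, flux, huR, huR', map_one, one_mul, neg_mul_neg, re_mul_ofReal, I_mul_re,
    conj_im, neg_neg]

theorem parameterFlux_neg_of_robin (hμ : μ.im < 0) (hu : IsCubicSol (-μ) 0 u) (hR : 0 < R)
    (huR : u R = 1) (huR' : deriv u R = -(R ^ (3 / 2 : ℝ) : ℝ)) (hr : r ∈ Icc 0 R) :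
    parameterFlux μ u r < 0 := by
  have hne : u ≠ 0 := fun h => by simp [h] at huR
  refine ((strictMonoOn_parameterFlux hμ hu hne).monotoneOn hr.1 hR.le hr.2).trans_lt ?_
  rw [parameterFlux_of_robin huR huR']
  exact mul_neg_of_neg_of_pos hμ (Real.rpow_pos_of_pos hR _)

theorem mul_sub_le_integral {h : ℝ → ℝ} (hh : Continuous h) (hr : 0 ≤ r) (hrs : r ≤ s)
    (hsR : s ≤ R) (hpos : ∀ x ∈ Icc 0 R, 0 ≤ h x) (hc : ∀ x ∈ Icc r s, c ≤ h x) :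
    c * (s - r) ≤ ∫ x in (0 : ℝ)..R, h x := by
  calc c * (s - r) = ∫ _ in r..s, c := by
        rw [intervalIntegral.integral_const, smul_eq_mul, mul_comm]
    _ ≤ ∫ x in r..s, h x := intervalIntegral.integral_mono_on hrs
        intervalIntegrable_const (hh.intervalIntegrable r s) hc
    _ ≤ ∫ x in (0 : ℝ)..R, h x := intervalIntegral.integral_mono_interval hr hrs hsR
        ((ae_restrict_mem measurableSet_Ioc).mono fun x hx => hpos x (Ioc_subset_Icc_self hx))
        (hh.intervalIntegrable 0 R)

theorem integral_neg_im_mul {P : ℝ → ℂ} (hP : Continuous P) (R : ℝ) (c d : ℂ) :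
    ∫ r in (0 : ℝ)..R, -(c * P r * d).im = -(c * (∫ r in (0 : ℝ)..R, P r) * d).im := by
  rw [intervalIntegral.integral_neg, ← intervalIntegral.integral_const_mul,
    ← intervalIntegral.integral_mul_const]
  have hcont : Continuous fun r => c * P r * d := by fun_prop
  exact congrArg Neg.neg (imCLM.intervalIntegral_comp_comm (hcont.intervalIntegrable 0 R))

theorem exists_mul_norm_sq_le_neg_im_integral (ρ : ℝ) (hσ : 0 < σ) :
    ∃ c > 0, ∀ R ≥ 2, ∀ μ u, ‖μ‖ ≤ ρ → μ.im ≤ -σ → IsCubicSol (-μ) 0 u → u (R : ℝ) = 1 →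
      deriv u R = -(R ^ (3 / 2 : ℝ) : ℝ) →
        c * ‖u 0‖ ^ 2 ≤ -(μ * (∫ r in (0 : ℝ)..R, dirichletSol μ r * u r) * conj (u 0)).im := by
  obtain ⟨Λ, hΛ, hΛS⟩ := exists_norm_dirichletSol_le ρ 2
  obtain ⟨s, ⟨hs, hs1⟩, hsS⟩ := exists_half_le_norm_dirichletSol ρ
  refine ⟨(s / 2 / 2) ^ 2 * (σ / (2 * Λ ^ 2)) * (s - s / 2), by
    have : 0 < s - s / 2 := by linarith
    positivity, fun R hR μ u hμρ hμσ hu huR huR' => ?_⟩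
  have hμ : μ.im < 0 := by linarith
  have hflux : ∀ r ∈ Icc 0 R, parameterFlux μ u r < 0 := fun r hr =>
    parameterFlux_neg_of_robin hμ hu (by linarith) huR huR' hr
  have hcont : Continuous fun r : ℝ => dirichletSol μ r * u r := by
    have := (isCubicSol_dirichletSol μ).differentiable.continuous
    have := hu.differentiable.continuous
    fun_prop
  rw [← integral_neg_im_mul hcont, mul_right_comm _ _ (‖u 0‖ ^ 2)]
  refine mul_sub_le_integral
    (continuous_im.comp ((hcont.const_mul μ).mul continuous_const)).neg (half_pos hs).le
    (half_le_self hs.le) (by linarith : s ≤ R) (fun r hr => ?_) (fun r hr => ?_)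
  · exact (mul_nonneg (sq_nonneg _) (neg_pos.mpr (hflux r hr)).le).trans
      (neg_norm_sq_mul_parameterFlux_le hμ hu hr.1)
  · have hr0 : 0 ≤ r := (half_pos hs).le.trans hr.1
    have hne : u ≠ 0 := fun h => by simp [h] at huR
    have hmono : parameterFlux μ u r ≤ parameterFlux μ u 1 :=
      (strictMonoOn_parameterFlux hμ hu hne).monotoneOn hr0 (mem_Ici.mpr zero_le_one)
        (hr.2.trans hs1)
    have hone := le_neg_parameterFlux_one hu hμσ hσ.le (by linarith) (hΛS μ hμρ)
      (hflux 2 ⟨zero_le_two, hR⟩).le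
    have hS : s / 2 / 2 ≤ ‖dirichletSol μ r‖ :=
      le_trans (by linarith [hr.1]) (hsS μ hμρ r ⟨hr0, hr.2⟩)
    refine le_trans ?_ (neg_norm_sq_mul_parameterFlux_le hμ hu hr0)
    rw [mul_assoc]
    gcongr
    linarith

theorem exists_le_re_deriv_div_shooting (ρ : ℝ) (hσ : 0 < σ) :
    ∃ c > 0, ∀ R ≥ 2, ∀ μ, ‖μ‖ ≤ ρ → μ.im ≤ -σ → ∃ D, HasDerivAt (shooting R) D μ ∧
      shooting R μ ≠ 0 ∧ c ≤ (D * -(I * μ) / shooting R μ).re := by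
  obtain ⟨c, hc, hcu⟩ := exists_mul_norm_sq_le_neg_im_integral ρ hσ
  refine ⟨c, hc, fun R hR μ hμρ hμσ => ?_⟩
  obtain ⟨u, hu, huR, huR'⟩ := exists_isCubicSol (-μ) R 1 (-(R ^ (3 / 2 : ℝ) : ℝ))
  have hR0 : 0 < R := by linarith
  have hu0 : u 0 = shooting R μ := by simpa [huR, huR'] using (shooting_mul hu R).symm
  have hne : u 0 ≠ 0 := by
    simpa using ne_zero_of_parameterFlux_ne_zero
      (parameterFlux_neg_of_robin (by linarith) hu hR0 huR huR' ⟨le_rfl, hR0.le⟩).ne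
  refine ⟨_, hasDerivAt_shooting hu hR0.le huR huR', hu0 ▸ hne, ?_⟩
  have hbound := hcu R hR μ u hμρ hμσ hu huR huR'
  have hpos : 0 < ‖u 0‖ ^ 2 := by positivity
  rw [← hu0, div_eq_mul_inv, inv_def, ← mul_assoc, re_mul_ofReal, normSq_eq_norm_sq,
    ← div_eq_mul_inv, le_div_iff₀ hpos]
  refine hbound.trans_eq ?_
  rw [← I_mul_re]
  ring_nf

theorem exists_mul_sub_le_log_norm_shooting (hρ : 0 ≤ ρ) (hσ : 0 < σ) :
    ∃ c > 0, ∀ R ≥ 2, ∀ α β, α ≤ β → (∀ θ ∈ Icc α β, σ ≤ ρ * Real.sin θ) →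
      c * (β - α) ≤ Real.log ‖shooting R (ρ * exp (-(β * I)))‖ -
        Real.log ‖shooting R (ρ * exp (-(α * I)))‖ := by
  obtain ⟨c, hc, hcD⟩ := exists_le_re_deriv_div_shooting ρ hσ
  refine ⟨c, hc, fun R hR α β hαβ hsin => ?_⟩
  have hcircle : ∀ θ : ℝ, HasDerivAt (fun θ : ℝ => (ρ : ℂ) * exp (-(θ * I)))
      (-(I * (ρ * exp (-(θ * I))))) θ := fun θ =>
    (((hasDerivAt_id θ).ofReal_comp.mul_const I).neg.cexp.const_mul (ρ : ℂ)).congr_deriv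
      (by simp only [Pi.neg_apply, id, ofReal_one, one_mul]; ring)
  have hderiv : ∀ θ ∈ Icc α β, ∃ L ≥ c, HasDerivAt
      (fun θ : ℝ => Real.log ‖shooting R (ρ * exp (-(θ * I)))‖) L θ := fun θ hθ => by
    have hneg : -((θ : ℂ) * I) = (-θ : ℝ) * I := by push_cast; ring
    obtain ⟨D, hD, hne, hle⟩ := hcD R hR (ρ * exp (-(θ * I)))
      (by rw [hneg, norm_mul, norm_exp_ofReal_mul_I, norm_real, Real.norm_of_nonneg hρ, mul_one])
      (by rw [hneg, im_ofReal_mul, exp_ofReal_mul_I_im, Real.sin_neg]; linarith [hsin θ hθ])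
    have hcomp := hD.comp θ (hcircle θ)
    exact ⟨_, hle, hasDerivAt_log_norm hcomp hne⟩
  refine (convex_Icc α β).mul_sub_le_image_sub_of_le_deriv
    (f := fun θ : ℝ => Real.log ‖shooting R (ρ * exp (-(θ * I)))‖)
    (fun θ hθ => ?_) (fun θ hθ => ?_) (fun θ hθ => ?_) α ⟨le_rfl, hαβ⟩ β ⟨hαβ, le_rfl⟩ hαβ
  · obtain ⟨L, -, hL⟩ := hderiv θ hθ
    exact hL.continuousAt.continuousWithinAt
  · obtain ⟨L, -, hL⟩ := hderiv θ (interior_subset hθ)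
    exact hL.differentiableAt.differentiableWithinAt
  · obtain ⟨L, hcL, hL⟩ := hderiv θ (interior_subset hθ)
    exact hL.deriv ▸ hcL

end

/-! ### Reality of the eigenvalues -/

section

variable {a : ℂ} {f : ℂ → ℂ}

theorem rayDir_sq_mul (a : ℂ) :
    rayDir ^ 2 * a = ‖a‖ * exp ((4 * Real.pi / 5 + arg a : ℝ) * I) := by
  conv_lhs => rw [← norm_mul_exp_arg_mul_I a]
  rw [rayDir, ← exp_nat_mul, mul_left_comm, ← exp_add]
  congr 2
  push_cast
  ring

theorem neg_rayDir_sq_mul (a : ℂ) :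
    -(rayDir ^ 2 * a) = ‖a‖ * exp (-((Real.pi / 5 - arg a : ℝ) * I)) := by
  rw [rayDir_sq_mul, ← mul_neg, ← exp_sub_pi_mul_I]
  congr 2
  push_cast
  ring

theorem comp_rayDir_mul_ne_zero (hne : f ≠ 0) : (fun z => f (rayDir * z)) ≠ 0 := fun h =>
  hne <| funext fun z => by simpa [rayDir_ne_zero] using congrFun h (rayDir⁻¹ * z)

theorem rayDir_sq_im_pos : 0 < (rayDir ^ 2).im := by
  have hpi := Real.pi_pos
  have h := rayDir_sq_mul 1
  rw [mul_one, norm_one, ofReal_one, one_mul, arg_one, add_zero] at h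
  rw [h, exp_ofReal_mul_I_im]
  exact Real.sin_pos_of_pos_of_lt_pi (by positivity) (by linarith)

/-- Otherwise the flux of `f` in the direction `i` and that of its reflection in the direction
`i t̄²` both increase to `0` along the ray, although they cancel at the origin. -/
theorem rayDir_sq_mul_im_pos (hf : IsCubicSol a 0 f) (hL : AxisL2 f) (hne : f ≠ 0)
    (ha : 0 ≤ a.im) : 0 < (rayDir ^ 2 * a).im := by
  by_contra! hle
  have hu := hf.comp_mul_left_homogeneous rayDir_pow_five
  have hv := hf.reflect_homogeneous.comp_mul_left_homogeneous rayDir_pow_five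
  have hvne := comp_rayDir_mul_ne_zero (reflect_ne_zero hne)
  have hA := nonpos_of_monotoneOn_of_tendsto_zero
    (monotoneOn_flux (ζ := I) (by simp) (by rwa [I_mul_re, neg_nonneg]) hu)
    ((IsRecessive.of_axisL2 hf hL).tendsto_flux hu.differentiable I) le_rfl
  have hζ : 0 < (I * conj (rayDir ^ 2)).re := by
    rw [I_mul_re, conj_im, neg_neg]; exact rayDir_sq_im_pos
  have hζa : 0 ≤ (I * conj (rayDir ^ 2) * (rayDir ^ 2 * conj a)).re := by
    rwa [mul_assoc, ← mul_assoc (conj _), conj_mul', norm_pow, norm_rayDir, one_pow, ofReal_one,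
      one_pow, one_mul, I_mul_re, conj_im, neg_neg]
  have hB := neg_of_strictMonoOn_of_tendsto_zero (strictMonoOn_flux hζ hζa hv hvne)
    ((IsRecessive.of_axisL2 hf.reflect_homogeneous hL.reflect).tendsto_flux hv.differentiable _)
    le_rfl
  have hcancel : I * conj (rayDir ^ 2) * (f 0 * (rayDir * conj (deriv f 0))) =
      -conj (I * (conj (f 0) * (rayDir * deriv f 0))) := by
    have hnorm : conj rayDir * rayDir = 1 := by rw [conj_mul', norm_rayDir, ofReal_one, one_pow]
    simp only [map_mul, map_pow, conj_conj, conj_I]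
    linear_combination I * conj rayDir * f 0 * conj (deriv f 0) * hnorm
  have hderiv : deriv (fun z => reflect f (rayDir * z)) 0 = rayDir * conj (deriv f 0) := by
    rw [deriv_comp_mul_left, deriv_reflect, smul_eq_mul, mul_zero, reflect, map_zero]
  simp only [flux, ofReal_zero, hderiv] at hB
  simp only [flux, ofReal_zero, mul_zero, deriv_comp_mul_left, smul_eq_mul] at hA
  simp only [mul_zero, reflect, map_zero, conj_conj] at hB
  rw [hcancel, neg_re, conj_re] at hB
  linarith

theorem tendsto_log_norm_shooting_sub (hf : IsCubicSol a 0 f) (hL : AxisL2 f) (hne : f ≠ 0)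
    (hμ : (-(rayDir ^ 2 * a)).im < 0) (hν : (-(rayDir ^ 2 * conj a)).im < 0) :
    Tendsto (fun R : ℝ => Real.log ‖shooting R (-(rayDir ^ 2 * conj a))‖ -
      Real.log ‖shooting R (-(rayDir ^ 2 * a))‖) atTop (𝓝 0) := by
  have hF := hf.reflect_homogeneous
  have hu := (neg_neg (rayDir ^ 2 * a)).symm ▸ hf.comp_mul_left_homogeneous rayDir_pow_five
  have hv := (neg_neg (rayDir ^ 2 * conj a)).symm ▸ hF.comp_mul_left_homogeneous rayDir_pow_five
  have h₁ := (IsRecessive.of_axisL2 hf hL).tendsto_log_norm_shooting hμ hu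
    (comp_rayDir_mul_ne_zero hne)
  have h₂ := (IsRecessive.of_axisL2 hF hL.reflect).tendsto_log_norm_shooting hν hv
    (comp_rayDir_mul_ne_zero (reflect_ne_zero hne))
  have hlim := (h₂.sub h₁).sub (tendsto_log_norm_ray_sub_reflect hf hL hne)
  simp only [mul_zero, reflect, map_zero, Complex.norm_conj, sub_self] at hlim
  refine hlim.congr fun R => ?_
  ring

theorem arg_lt_of_axisL2 (hf : IsCubicSol a 0 f) (hL : AxisL2 f) (hne : f ≠ 0)
    (ha : 0 ≤ a.im) : arg a < Real.pi / 5 := by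
  have hpos := rayDir_sq_mul_im_pos hf hL hne ha
  rw [rayDir_sq_mul, im_ofReal_mul, exp_ofReal_mul_I_im] at hpos
  by_contra! hge
  refine (pos_of_mul_pos_right hpos (norm_nonneg a)).not_ge ?_
  rw [← neg_nonneg, ← Real.sin_sub_pi]
  exact Real.sin_nonneg_of_nonneg_of_le_pi (by linarith) (by linarith [arg_le_pi a, Real.pi_pos])

theorem im_ofReal_mul_exp_neg_mul_I (ρ θ : ℝ) :
    (ρ * exp (-(θ * I))).im = -(ρ * Real.sin θ) := by
  rw [← neg_mul, ← ofReal_neg, im_ofReal_mul, exp_ofReal_mul_I_im, Real.sin_neg, mul_neg]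

/-- The parameters of `f` and of its reflection on the ray are `|a| e^{-iα}` and `|a| e^{-iβ}`, and
their shooting functions, which separate as the angle grows, have asymptotically equal modulus. -/
theorem im_nonpos_of_axisL2 (hf : IsCubicSol a 0 f) (hL : AxisL2 f) (hne : f ≠ 0) :
    a.im ≤ 0 := by
  by_contra! ha
  have ha0 : 0 < ‖a‖ := norm_pos_iff.mpr fun h => by simp [h] at ha
  have harg : 0 < arg a := (arg_nonneg_iff.mpr ha.le).lt_of_ne' fun h =>
    ha.ne' (by rw [← (arg_eq_zero_iff.mp h).2])
  have harg5 := arg_lt_of_axisL2 hf hL hne ha.le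
  have hμeq := neg_rayDir_sq_mul a
  have hνeq := neg_rayDir_sq_mul (conj a)
  rw [Complex.norm_conj, arg_conj, if_neg (by linarith [Real.pi_pos]), sub_neg_eq_add] at hνeq
  obtain ⟨α, hα⟩ : ∃ α, α = Real.pi / 5 - arg a := ⟨_, rfl⟩
  obtain ⟨β, hβ⟩ : ∃ β, β = Real.pi / 5 + arg a := ⟨_, rfl⟩
  rw [← hα] at hμeq
  rw [← hβ] at hνeq
  have hαβ : α < β := by linarith
  have hsin_pos : 0 < Real.sin α := Real.sin_pos_of_pos_of_lt_pi (by linarith) (by linarith)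
  have hsin : ∀ θ ∈ Icc α β, ‖a‖ * Real.sin α ≤ ‖a‖ * Real.sin θ := fun θ hθ => by
    gcongr
    exact Real.sin_le_sin_of_le_of_le_pi_div_two (by linarith) (by linarith [hθ.2]) hθ.1
  have hneg : ∀ θ ∈ Icc α β, (‖a‖ * exp (-(θ * I))).im < 0 := fun θ hθ => by
    rw [im_ofReal_mul_exp_neg_mul_I, neg_lt_zero]
    exact (mul_pos ha0 hsin_pos).trans_le (hsin θ hθ)
  obtain ⟨c, hc, hgap⟩ := exists_mul_sub_le_log_norm_shooting ha0.le (mul_pos ha0 hsin_pos)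
  have hlim := tendsto_log_norm_shooting_sub hf hL hne
    (hμeq ▸ hneg α (left_mem_Icc.mpr hαβ.le)) (hνeq ▸ hneg β (right_mem_Icc.mpr hαβ.le))
  rw [hμeq, hνeq] at hlim
  have hle := ge_of_tendsto hlim ((eventually_ge_atTop 2).mono fun R hR =>
    hgap R hR α β hαβ.le hsin)
  exact hle.not_gt (mul_pos hc (sub_pos.mpr hαβ))

theorem im_eq_zero_of_axisL2 (hf : IsCubicSol a 0 f) (hL : AxisL2 f) (hne : f ≠ 0) :
    a.im = 0 := by
  have hconj := im_nonpos_of_axisL2 hf.reflect_homogeneous hL.reflect (reflect_ne_zero hne)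
  rw [conj_im, neg_nonpos] at hconj
  exact (im_nonpos_of_axisL2 hf hL hne).antisymm hconj

end

/-! ### Absence of Jordan vectors -/

section

variable {a : ℂ} {f g p : ℂ → ℂ}

theorem wronskian_comp_rayDir_mul (f p : ℂ → ℂ) (z : ℂ) :
    wronskian (fun z => f (rayDir * z)) (fun z => p (rayDir * z)) z =
      rayDir * wronskian f p (rayDir * z) := by
  simp only [wronskian, deriv_comp_mul_left, smul_eq_mul]
  ring

theorem wronskian_dirichletSol_eq_div {μ : ℂ} {u q : ℂ → ℂ} (hu : IsCubicSol (-μ) 0 u) {z : ℂ}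
    (hz : u z ≠ 0) : wronskian (dirichletSol μ) q z =
      dirichletSol μ z * wronskian u q z / u z - u 0 * (q z / u z) := by
  have hw := wronskian_dirichletSol hu z
  rw [mul_div_assoc', ← sub_div, eq_div_iff hz]
  simp only [wronskian] at hw ⊢
  linear_combination (q z) * hw

theorem tendsto_im_wronskian_dirichletSol (hf : IsCubicSol a 0 f) (hp : IsCubicSol a f p)
    (hfL : AxisL2 f) (hpL : AxisL2 p) (hne : f ≠ 0) (hfr : ∀ x : ℝ, (f x).im = 0)
    (hpr : ∀ x : ℝ, (p x).im = 0) {μ : ℂ} (hμ : μ = -(rayDir ^ 2 * a)) (hμim : μ.im < 0) :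
    Tendsto (fun r : ℝ => (wronskian (dirichletSol μ) (fun z => p (rayDir * z)) r).im) atTop
      (𝓝 0) := by
  have hu : IsCubicSol (-μ) 0 fun z => f (rayDir * z) := by
    rw [hμ, neg_neg]; exact hf.comp_mul_left_homogeneous rayDir_pow_five
  have hSu := (IsRecessive.of_axisL2 hf hfL).tendsto_dirichletSol_mul hμim hu
  have hsmall : Tendsto (fun r : ℝ => dirichletSol μ r *
      (rayDir * wronskian f p (rayDir * r)) / f (rayDir * r)) atTop (𝓝 0) := by
    refine squeeze_zero_norm' ?_ (tendsto_zero_iff_norm_tendsto_zero.mp hSu)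
    filter_upwards [eventually_norm_wronskian_le hf hp hfL hpL, eventually_ne_zero hf hfL hne,
      tendsto_slopeBound.eventually_ge_atTop 1, eventually_ge_atTop 0] with r hω hf0 hslope hr0
    have hquad := ofReal_mul_rayDir_mem_quadrant hr0
    have hnorm := (norm_rayDir_mul hr0).ge
    have hω' : ‖wronskian f p (rayDir * r)‖ ≤ ‖f (rayDir * r)‖ ^ 2 :=
      (le_mul_of_one_le_left (norm_nonneg _) hslope).trans (hω _ hquad hnorm)
    have hpos := norm_pos_iff.mpr (hf0 _ hquad hnorm)
    rw [norm_div, norm_mul, norm_mul, norm_mul, norm_rayDir, one_mul, div_le_iff₀ hpos, mul_assoc,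
      ← sq]
    gcongr
  have hdiv := (tendsto_im_div_ray hf hp hfL hpL hne hfr hpr).const_mul (f 0).re
  have him := ((continuous_im.tendsto 0).comp hsmall).sub hdiv
  simp only [zero_im, mul_zero, sub_self] at him
  refine him.congr' ?_
  filter_upwards [eventually_ne_zero hf hfL hne, eventually_ge_atTop 0] with r hf0 hr0
  have hz := hf0 _ (ofReal_mul_rayDir_mem_quadrant hr0) (norm_rayDir_mul hr0).ge
  have hf0re : f 0 = (f 0).re := Complex.ext rfl (by simpa using hfr 0)
  rw [wronskian_dirichletSol_eq_div hu hz, wronskian_comp_rayDir_mul, mul_zero, sub_im, hf0re,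
    im_ofReal_mul, ofReal_re]
  rfl

theorem hasDerivAt_im_wronskian_dirichletSol (ha : a.im = 0) (hf0 : (f 0).im = 0)
    (hp : IsCubicSol a f p) {μ : ℂ} (hμ : μ = -(rayDir ^ 2 * a)) (r : ℝ) :
    HasDerivAt (fun r : ℝ => a.re * (f 0).re *
      (wronskian (dirichletSol μ) (fun z => p (rayDir * z)) r).im)
      (-(μ * (dirichletSol μ r * f (rayDir * r)) * conj (f 0)).im) r := by
  have hq : IsCubicSol (-μ) (fun z => rayDir ^ 2 * f (rayDir * z)) fun z => p (rayDir * z) := by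
    rw [hμ, neg_neg]; exact hp.comp_mul_left rayDir_pow_five
  have hW := (imCLM.hasFDerivAt.comp_hasDerivAt r
    (hasDerivAt_wronskian (isCubicSol_dirichletSol μ) hq r).comp_ofReal).const_mul
      (a.re * (f 0).re)
  refine hW.congr_deriv ?_
  have hare : ((a.re : ℝ) : ℂ) = a := conj_eq_iff_re.mp (conj_eq_iff_im.mpr ha)
  have hf0re : (((f 0).re : ℝ) : ℂ) = f 0 := conj_eq_iff_re.mp (conj_eq_iff_im.mpr hf0)
  rw [imCLM_apply, ← im_ofReal_mul, ← neg_im, conj_eq_iff_im.mpr hf0, ofReal_mul, hare, hf0re, hμ]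
  congr 1
  ring

/-- With `W` the Wronskian of the Dirichlet solution and the restriction of `p` to the ray,
`a f(0) Im W` starts from `0` and increases strictly, and yet tends to `0`. -/
theorem not_isCubicSol_of_real (hf : IsCubicSol a 0 f) (hfL : AxisL2 f) (hpL : AxisL2 p)
    (hne : f ≠ 0) (ha : a.im = 0) (hfr : ∀ x : ℝ, (f x).im = 0) (hpr : ∀ x : ℝ, (p x).im = 0) :
    ¬ IsCubicSol a f p := fun hp => by
  obtain ⟨μ, hμ⟩ : ∃ μ, μ = -(rayDir ^ 2 * a) := ⟨_, rfl⟩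
  have hμim : μ.im < 0 := by
    rw [hμ, neg_im, neg_lt_zero]; exact rayDir_sq_mul_im_pos hf hfL hne ha.ge
  have hu : IsCubicSol (-μ) 0 fun z => f (rayDir * z) := by
    rw [hμ, neg_neg]; exact hf.comp_mul_left_homogeneous rayDir_pow_five
  have hf0 : (f 0).im = 0 := by simpa using hfr 0
  have hderiv := hasDerivAt_im_wronskian_dirichletSol ha hf0 hp hμ
  have hmono := strictMonoOn_of_deriv_pos (convex_Ici 0)
    (fun r _ => (hderiv r).continuousAt.continuousWithinAt) fun r hr => by
      rw [interior_Ici, mem_Ioi] at hr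
      rw [(hderiv r).deriv]
      simpa only [mul_zero] using (IsRecessive.of_axisL2 hf hfL).neg_im_mul_dirichletSol_mul_pos
        hμim hu (comp_rayDir_mul_ne_zero hne) hr
  have hlim := (tendsto_im_wronskian_dirichletSol hf hp hfL hpL hne hfr hpr hμ hμim).const_mul
    (a.re * (f 0).re)
  rw [mul_zero] at hlim
  refine (neg_of_strictMonoOn_of_tendsto_zero hmono hlim le_rfl).ne ?_
  have hp0 : (p 0).im = 0 := by simpa using hpr 0
  simp [wronskian, dirichletSol_zero, deriv_dirichletSol_zero, hp0]

theorem add_reflect_im (f : ℂ → ℂ) (x : ℝ) : ((f + reflect f) x).im = 0 := by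
  rw [Pi.add_apply, reflect_ofReal, add_im, conj_im, add_neg_cancel]

theorem exists_smul_add_reflect_ne_zero (hne : f ≠ 0) : ∃ c : ℂ, c • f + reflect (c • f) ≠ 0 := by
  by_contra! h
  refine hne (funext fun z => ?_)
  have h₁ := congrFun (h 1) z
  have h₂ := congrFun (h I) z
  simp only [reflect, Pi.add_apply, Pi.smul_apply, Pi.zero_apply, smul_eq_mul, map_mul, map_one,
    conj_I] at h₁ h₂ ⊢
  linear_combination (1 / 2) * h₁ - I / 2 * h₂ + (f z - conj (f (conj z))) / 2 * I_sq

theorem IsCubicSol.add_reflect (ha : conj a = a) (hf : IsCubicSol a g f) :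
    IsCubicSol a (g + CubicOscillator.reflect g) (f + CubicOscillator.reflect f) := by
  refine hf.add ?_
  simpa only [ha] using hf.reflect

theorem AxisL2.add_reflect (hf : AxisL2 f) (hcont : Continuous f) :
    AxisL2 (f + CubicOscillator.reflect f) :=
  hf.add hf.reflect hcont (continuous_conj.comp (hcont.comp continuous_conj))

theorem not_isCubicSol_of_axisL2 (hf : IsCubicSol a 0 f) (hfL : AxisL2 f) (hpL : AxisL2 p)
    (hne : f ≠ 0) : ¬ IsCubicSol a f p := fun hp => by
  have ha := im_eq_zero_of_axisL2 hf hfL hne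
  have hconj : conj a = a := conj_eq_iff_im.mpr ha
  obtain ⟨c, hc⟩ := exists_smul_add_reflect_ne_zero hne
  have hcf := hf.const_smul c
  have hcp := hp.const_smul c
  have hF := hcf.add_reflect hconj
  rw [smul_zero, reflect_zero, add_zero] at hF
  exact not_isCubicSol_of_real hF
    ((hfL.const_smul c).add_reflect hcf.differentiable.continuous)
    ((hpL.const_smul c).add_reflect hcp.differentiable.continuous) hc ha
    (add_reflect_im _) (add_reflect_im _) (hcp.add_reflect hconj)

end

end CubicOscillator

/-- Algebraic simplicity: no Jordan generalized eigenvector exists. -/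
theorem algebraic_simplicity (lam : ℂ) (ψ : ℝ → ℂ)
    (hψne : ψ ≠ 0) (hψsmooth : ContDiff ℝ 2 ψ)
    (hψint : Integrable (fun x : ℝ => ‖ψ x‖ ^ 2))
    (hψeq : ∀ x : ℝ, -(deriv (deriv ψ) x) + Complex.I * (x : ℂ) ^ 3 * ψ x = lam * ψ x) :
    ¬ ∃ φ : ℝ → ℂ, ContDiff ℝ 2 φ ∧
      Integrable (fun x : ℝ => ‖φ x‖ ^ 2) ∧
      ∀ x : ℝ, -(deriv (deriv φ) x) + Complex.I * (x : ℂ) ^ 3 * φ x - lam * φ x = ψ x := by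
  rintro ⟨φ, hφsmooth, hφint, hφeq⟩
  obtain ⟨f, hf, hfψ⟩ := CubicOscillator.exists_isCubicSol_eq_on_axis (a := lam) (g := 0)
    (differentiable_const 0) hψsmooth fun x => sub_eq_zero.mpr (hψeq x)
  obtain ⟨p, hp, hpφ⟩ := CubicOscillator.exists_isCubicSol_eq_on_axis (a := lam)
    hf.differentiable hφsmooth fun x => (hφeq x).trans (hfψ x).symm
  have hfL : CubicOscillator.AxisL2 f := by simpa only [CubicOscillator.AxisL2, hfψ] using hψint
  have hpL : CubicOscillator.AxisL2 p := by simpa only [CubicOscillator.AxisL2, hpφ] using hφint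
  have hne : f ≠ 0 := fun h => hψne (funext fun x => by simp [← hfψ, h])
  exact CubicOscillator.not_isCubicSol_of_axisL2 hf hfL hpL hne hp
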